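/- arXiv:2007.12576 — 4 statements merged into one kernel-verified Lean document; each statement's English description precedes it below -/
import Mathlib

section
/- Let β ∈ (0,1), let A and B be positive semidefinite n×n complex matrices with A positive definite, and let Φ be a positive linear map from n×n complex matrices to m×m complex matrices (i.e., Φ maps positive semidefinite matrices to positive semidefinite matrices) such that Φ(A) is positive definite. Then Φ(A #_β B) ≤ Φ(A) #_β Φ(B) in the Loewner order. -/
open Matrix Filter
open scoped Kronecker Classical ComplexOrder

noncomputable def Matrix.rpowH {n : Type*} [Fintype n] [DecidableEq n]
    (A : Matrix n n ℂ) (r : ℝ) : Matrix n n ℂ :=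
  if hA : A.IsHermitian then
    (hA.eigenvectorUnitary : Matrix n n ℂ) *
      Matrix.diagonal (fun i => ((hA.eigenvalues i ^ r : ℝ) : ℂ)) *
      star (hA.eigenvectorUnitary : Matrix n n ℂ)
  else 0

noncomputable def Matrix.gmean {n : Type*} [Fintype n] [DecidableEq n]
    (β : ℝ) (S A : Matrix n n ℂ) : Matrix n n ℂ :=
  S.rpowH (1/2) * ((S.rpowH (-(1/2)) * A * S.rpowH (-(1/2))).rpowH β) * S.rpowH (1/2)

noncomputable def QSharp {n : Type*} [Fintype n] [DecidableEq n]
    (α : ℝ) (ρ σ : Matrix n n ℂ) : ℝ :=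
  sInf { t : ℝ | ∃ A : Matrix n n ℂ, A.PosSemidef ∧
    (Matrix.gmean (1/α) σ A - ρ).PosSemidef ∧ t = A.trace.re }

noncomputable def DSharp {n : Type*} [Fintype n] [DecidableEq n]
    (α : ℝ) (ρ σ : Matrix n n ℂ) : ℝ :=
  1/(α-1) * Real.logb 2 (QSharp α ρ σ)

noncomputable def opNorm {n : Type*} [Fintype n] [DecidableEq n] (A : Matrix n n ℂ) : ℝ :=
  ‖(Matrix.toEuclideanCLM (𝕜 := ℂ) A : EuclideanSpace ℂ n →L[ℂ] EuclideanSpace ℂ n)‖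

noncomputable def Dtilde {n : Type*} [Fintype n] [DecidableEq n]
    (α : ℝ) (ρ σ : Matrix n n ℂ) : ℝ :=
  1/(α-1) * Real.logb 2
    (((σ.rpowH ((1-α)/(2*α)) * ρ * σ.rpowH ((1-α)/(2*α))).rpowH α).trace.re)

noncomputable def Dhat {n : Type*} [Fintype n] [DecidableEq n]
    (α : ℝ) (ρ σ : Matrix n n ℂ) : ℝ :=
  1/(α-1) * Real.logb 2
    ((σ.rpowH (1/2) * ((σ.rpowH (-(1/2)) * ρ * σ.rpowH (-(1/2))).rpowH α) * σ.rpowH (1/2)).trace.re)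

open MeasureTheory in
theorem aux_spectral {n : Type*} [Fintype n] [DecidableEq n] (X : Matrix n n ℂ)
    (hX : X.PosSemidef) :
    ∃ (d : n → ℝ) (P : n → Matrix n n ℂ), (∀ i, 0 ≤ d i) ∧ (X.PosDef → ∀ i, 0 < d i) ∧
      (∀ i, (P i).PosSemidef) ∧ (∀ i j, P i * P j = if i = j then P i else 0) ∧
      ∑ i, P i = 1 ∧ X = ∑ i, ((d i : ℝ) : ℂ) • P i ∧
      ∀ r : ℝ, X.rpowH r = ∑ i, ((d i ^ r : ℝ) : ℂ) • P i := by
  have hH := hX.1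
  set U : Matrix n n ℂ := (hH.eigenvectorUnitary : Matrix n n ℂ) with hU
  have hUU : star U * U = 1 := by
    simp [hU]
  have hUU' : U * star U = 1 := by
    simp [hU]
  let P : n → Matrix n n ℂ := fun i => U * Matrix.single i i 1 * star U
  have key : ∀ d : n → ℂ, U * Matrix.diagonal d * star U = ∑ i, d i • P i := by
    intro d
    have : Matrix.diagonal d = ∑ i, d i • Matrix.single i i (1:ℂ) := by
      ext p q
      simp only [Matrix.sum_apply, Matrix.smul_apply, Matrix.single_apply, Matrix.diagonal_apply]
      by_cases h : p = q
      · subst h; simp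
      · rw [if_neg h, Finset.sum_eq_zero]
        intro i _
        rw [if_neg (fun hh => h (hh.1.symm.trans hh.2)), smul_zero]
    rw [this, Finset.mul_sum, Finset.sum_mul]
    simp only [P, Matrix.mul_smul, Matrix.smul_mul]
  refine ⟨hH.eigenvalues, P, hX.eigenvalues_nonneg, fun h => h.eigenvalues_pos, ?_, ?_, ?_, ?_, ?_⟩
  · intro i
    have h1 : (Matrix.single i i (1:ℂ)).PosSemidef := by
      have : Matrix.single i i (1:ℂ) = Matrix.diagonal (Pi.single i 1) := by
        rw [Matrix.diagonal_single]
      rw [this]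
      refine Matrix.PosSemidef.diagonal ?_
      intro j
      by_cases h : j = i
      · subst h; simp
      · simp [h]
    exact h1.mul_mul_conjTranspose_same U
  · intro i j
    have : P i * P j = U * (Matrix.single i i 1 * Matrix.single j j 1) * star U := by
      simp only [P]
      calc _ = U * Matrix.single i i 1 * (star U * U) * Matrix.single j j 1 * star U := by noncomm_ring
        _ = _ := by rw [hUU]; noncomm_ring
    rw [this]
    split_ifs with h
    · subst h; simp [P]
    · rw [Matrix.single_mul_single_of_ne _ _ _ _ h]; simp
  · have := key (fun _ => 1)
    simpa [hUU'] using this.symm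
  · rw [← key]
    conv_lhs => rw [hH.spectral_theorem, Unitary.conjStarAlgAut_apply]
    rfl
  · intro r
    rw [Matrix.rpowH, dif_pos hH, ← key]

theorem aux_mul {n m : Type*} [Fintype n] [DecidableEq n] [Fintype m] [DecidableEq m]
    (P : m → Matrix n n ℂ) 
    (hPP : ∀ i j, P i * P j = if i = j then P i else 0) (a b : m → ℂ) :
    (∑ i, a i • P i) * (∑ i, b i • P i) = ∑ i, (a i * b i) • P i := by
  rw [Finset.sum_mul]
  refine Finset.sum_congr rfl fun i _ => ?_
  rw [Finset.mul_sum, Finset.sum_eq_single i]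
  · simp [hPP, smul_smul, mul_comm]
  · intro j _ hj
    simp [hPP, hj.symm]
  · simp

theorem aux_herm {n m : Type*} [Fintype n] [Fintype m] 
    (P : m → Matrix n n ℂ) (hP : ∀ i, (P i).PosSemidef) (a : m → ℝ) :
    (∑ i, (a i : ℂ) • P i).IsHermitian := by
  rw [Matrix.IsHermitian, Matrix.conjTranspose_sum]
  refine Finset.sum_congr rfl fun i _ => ?_
  rw [Matrix.conjTranspose_smul, (hP i).1.eq]
  simp

theorem aux_inv {k n m : Type*} [Fintype n] [DecidableEq n] [Fintype m] [DecidableEq m] [Fintype k]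
    (E : k → Matrix n n ℂ) (c : k → ℝ) (hE : ∀ i, (E i).PosSemidef) (hc : ∀ i, 0 < c i)
    (hE1 : ∑ i, E i = 1)
    (P : m → Matrix n n ℂ) (d : m → ℝ) (hP : ∀ i, (P i).PosSemidef) (hd : ∀ i, 0 < d i)
    (hP1 : ∑ i, P i = 1) (hPP : ∀ i j, P i * P j = if i = j then P i else 0)
    (hEP : ∑ i, (c i : ℂ) • E i = ∑ i, (d i : ℂ) • P i) :
    (∑ i, ((c i)⁻¹ : ℂ) • E i - ∑ i, ((d i)⁻¹ : ℂ) • P i).PosSemidef := by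
  set R := ∑ i, ((d i)⁻¹ : ℂ) • P i with hR
  have hRH : R.IsHermitian := by
    have := aux_herm P hP (fun i => (d i)⁻¹)
    simpa [hR] using this
  have hRM : R * (∑ i, (c i : ℂ) • E i) = 1 := by
    rw [hEP, hR, aux_mul P hPP, ← hP1]
    refine Finset.sum_congr rfl fun i _ => ?_
    have : (d i : ℂ) ≠ 0 := by exact_mod_cast (hd i).ne'
    rw [inv_mul_cancel₀ this, one_smul]
  have h1 : (∑ i, ((c i)⁻¹ : ℂ) • ((1 - (c i : ℂ) • R) * E i * (1 - (c i : ℂ) • R)ᴴ)).PosSemidef := by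
    refine Matrix.posSemidef_sum _ fun i _ => ?_
    refine Matrix.PosSemidef.smul ((hE i).mul_mul_conjTranspose_same _) ?_
    have := (inv_pos.2 (hc i)).le
    exact_mod_cast this
  convert h1 using 1
  have h2 : ∀ i, ((c i)⁻¹ : ℂ) • ((1 - (c i : ℂ) • R) * E i * (1 - (c i : ℂ) • R)ᴴ)
      = ((c i)⁻¹ : ℂ) • E i - R * E i - E i * R + R * ((c i : ℂ) • E i) * R := by
    intro i
    have hne : (c i : ℂ) ≠ 0 := by exact_mod_cast (hc i).ne'
    have : (1 - (c i : ℂ) • R)ᴴ = 1 - (c i : ℂ) • R := by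
      simp [Matrix.conjTranspose_smul, hRH.eq]
    rw [this]
    simp only [sub_mul, mul_sub, one_mul, mul_one, smul_sub, Matrix.smul_mul, Matrix.mul_smul, smul_smul]
    rw [← mul_assoc, inv_mul_cancel₀ hne]
    simp only [one_smul, one_mul]
    abel
  simp only [h2, Finset.sum_add_distrib, Finset.sum_sub_distrib, ← Finset.mul_sum, ← Finset.sum_mul,
    hE1, hRM]
  simp

theorem aux_q {n m : Type*} [Fintype n] [Fintype m] 
    (P : m → Matrix n n ℂ) (a : m → ℝ) (x : n → ℂ) :
    (star x ⬝ᵥ (∑ i, (a i : ℂ) • P i) *ᵥ x).re = ∑ i, a i * (star x ⬝ᵥ (P i) *ᵥ x).re := by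
  rw [Matrix.sum_mulVec, dotProduct_sum, Complex.re_sum]
  refine Finset.sum_congr rfl fun i _ => ?_
  rw [Matrix.smul_mulVec, dotProduct_smul]
  simp

open MeasureTheory in
theorem aux_pow {k n m : Type*} [Fintype n] [DecidableEq n] [Fintype m] [DecidableEq m] [Fintype k]
    (β : ℝ) (hβ0 : 0 < β) (hβ1 : β < 1)
    (E : k → Matrix n n ℂ) (c : k → ℝ) (hE : ∀ i, (E i).PosSemidef) (hc : ∀ i, 0 ≤ c i)
    (hE1 : ∑ i, E i = 1)
    (P : m → Matrix n n ℂ) (d : m → ℝ) (hP : ∀ i, (P i).PosSemidef) (hd : ∀ i, 0 ≤ d i)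
    (hP1 : ∑ i, P i = 1) (hPP : ∀ i j, P i * P j = if i = j then P i else 0)
    (hEP : ∑ i, (c i : ℂ) • E i = ∑ i, (d i : ℂ) • P i) :
    (∑ i, ((d i ^ β : ℝ) : ℂ) • P i - ∑ i, ((c i ^ β : ℝ) : ℂ) • E i).PosSemidef := by
  obtain ⟨μ, hμ⟩ := Real.exists_measure_rpow_eq_integral_rpowIntegrand₀₁ (p := β) ⟨hβ0, hβ1⟩
  have hH := (aux_herm P hP (fun i => d i ^ β)).sub (aux_herm E hE (fun i => c i ^ β))
  refine Matrix.PosSemidef.of_dotProduct_mulVec_nonneg hH fun x => ?_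
  have him : (star x ⬝ᵥ (∑ i, ((d i ^ β : ℝ) : ℂ) • P i - ∑ i, ((c i ^ β : ℝ) : ℂ) • E i) *ᵥ x).im = 0 :=
    hH.im_star_dotProduct_mulVec_self x
  rw [Complex.le_def]
  refine ⟨?_, by simpa using him.symm⟩
  rw [Matrix.sub_mulVec, dotProduct_sub, Complex.sub_re, aux_q P, aux_q E, Complex.zero_re, sub_nonneg]
  have hI : ∀ (l : Type _) [Fintype l] (a w : l → ℝ), (∀ i, 0 ≤ a i) →
      Integrable (fun t => ∑ i, Real.rpowIntegrand₀₁ β t (a i) * w i) (μ.restrict (Set.Ioi 0)) ∧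
      ∑ i, a i ^ β * w i = ∫ t in Set.Ioi 0, ∑ i, Real.rpowIntegrand₀₁ β t (a i) * w i ∂μ := by
    intro l _ a w ha
    have h1 : ∀ i, Integrable (fun t => Real.rpowIntegrand₀₁ β t (a i) * w i) (μ.restrict (Set.Ioi 0)) :=
      fun i => (hμ (a i) (ha i)).1.mul_const _
    refine ⟨integrable_finsetSum _ fun i _ => h1 i, ?_⟩
    rw [integral_finsetSum _ fun i _ => h1 i]
    refine Finset.sum_congr rfl fun i _ => ?_
    rw [integral_mul_const, ← (hμ (a i) (ha i)).2]
  have hI' : ∀ (l : Type _) [Fintype l] (a w : l → ℝ), (∀ i, 0 ≤ a i) →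
      Integrable (fun t => ∑ i, Real.rpowIntegrand₀₁ β t (a i) * w i) (μ.restrict (Set.Ioi 0)) ∧
      ∑ i, a i ^ β * w i = ∫ t in Set.Ioi 0, ∑ i, Real.rpowIntegrand₀₁ β t (a i) * w i ∂μ := by
    intro l _ a w ha
    have h1 : ∀ i, Integrable (fun t => Real.rpowIntegrand₀₁ β t (a i) * w i) (μ.restrict (Set.Ioi 0)) :=
      fun i => (hμ (a i) (ha i)).1.mul_const _
    refine ⟨integrable_finsetSum _ fun i _ => h1 i, ?_⟩
    rw [integral_finsetSum _ fun i _ => h1 i]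
    refine Finset.sum_congr rfl fun i _ => ?_
    rw [integral_mul_const, ← (hμ (a i) (ha i)).2]
  obtain ⟨i1, e1⟩ := hI k c (fun i => (star x ⬝ᵥ (E i) *ᵥ x).re) hc
  obtain ⟨i2, e2⟩ := hI' m d (fun i => (star x ⬝ᵥ (P i) *ᵥ x).re) hd
  rw [e1, e2]
  refine setIntegral_mono_on i1 i2 measurableSet_Ioi fun t ht => ?_
  have ht' : 0 < t := ht
  have h3 := aux_inv E (fun i => t + c i) hE (fun i => by have := hc i; positivity) hE1
    P (fun i => t + d i) hP (fun i => by have := hd i; positivity) hP1 hPP (by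
      simp only [Complex.ofReal_add, add_smul, Finset.sum_add_distrib, hEP, ← Finset.smul_sum, hE1, hP1])
  have h4 := h3.re_dotProduct_nonneg x
  have h5 : 0 ≤ (star x ⬝ᵥ (∑ i, (((t + c i)⁻¹ : ℝ) : ℂ) • E i - ∑ i, (((t + d i)⁻¹ : ℝ) : ℂ) • P i) *ᵥ x).re := by
    simpa using h4
  rw [Matrix.sub_mulVec, dotProduct_sub, Complex.sub_re, aux_q P, aux_q E, sub_nonneg] at h5
  have h6 : ∑ i, (star x ⬝ᵥ (E i) *ᵥ x).re = ∑ i, (star x ⬝ᵥ (P i) *ᵥ x).re := by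
    rw [← Complex.re_sum, ← Complex.re_sum, ← dotProduct_sum, ← dotProduct_sum,
      ← Matrix.sum_mulVec, ← Matrix.sum_mulVec, hE1, hP1]
  simp only [Real.rpowIntegrand₀₁, mul_assoc, ← Finset.mul_sum, sub_mul, Finset.sum_sub_distrib, h6]
  exact mul_le_mul_of_nonneg_left (by linarith) (Real.rpow_nonneg ht'.le _)

theorem aux_half {n : Type*} [Fintype n] [DecidableEq n] (X : Matrix n n ℂ) (hX : X.PosDef) :
    (X.rpowH (1/2)).IsHermitian ∧ (X.rpowH (-(1/2))).IsHermitian ∧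
    X.rpowH (1/2) * X.rpowH (-(1/2)) = 1 ∧ X.rpowH (-(1/2)) * X.rpowH (1/2) = 1 ∧
    X.rpowH (1/2) * X.rpowH (1/2) = X := by
  obtain ⟨d, P, -, hd, hP, hPP, hP1, hXe, hr⟩ := aux_spectral X hX.posSemidef
  have hd := hd hX
  have hm : ∀ r s : ℝ, X.rpowH r * X.rpowH s = X.rpowH (r + s) := by
    intro r s
    rw [hr, hr, hr, aux_mul P hPP]
    refine Finset.sum_congr rfl fun i _ => ?_
    rw [Real.rpow_add (hd i)]
    push_cast
    rfl
  have h0 : X.rpowH 0 = 1 := by rw [hr, ← hP1]; simp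
  have h1 : X.rpowH 1 = X := by rw [hr]; conv_rhs => rw [hXe]
                                simp
  refine ⟨by rw [hr]; exact aux_herm P hP _, by rw [hr]; exact aux_herm P hP _, ?_, ?_, ?_⟩
  · rw [hm, ← h0]; norm_num
  · rw [hm, ← h0]; norm_num
  · rw [hm]; conv_rhs => rw [← h1]
    norm_num

/-- positive linear maps are subadditive w.r.t. the β-weighted
matrix geometric mean: Φ(A #_β B) ≤ Φ(A) #_β Φ(B) in the Loewner order. -/
theorem positive_map_gmean_subadditive
    {n m : Type*} [Fintype n] [DecidableEq n] [Fintype m] [DecidableEq m]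
    (β : ℝ) (hβ0 : 0 < β) (hβ1 : β < 1)
    (A B : Matrix n n ℂ) (hA : A.PosDef) (hB : B.PosSemidef)
    (Φ : Matrix n n ℂ →ₗ[ℂ] Matrix m m ℂ)
    (hΦ : ∀ C : Matrix n n ℂ, C.PosSemidef → (Φ C).PosSemidef)
    (hΦA : (Φ A).PosDef) :
    (Matrix.gmean β (Φ A) (Φ B) - Φ (Matrix.gmean β A B)).PosSemidef := by
  obtain ⟨aH, aH', a1, a2, a3⟩ := aux_half A hA
  obtain ⟨sH, sH', s1, s2, s3⟩ := aux_half (Φ A) hΦA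
  unfold Matrix.gmean
  set a := A.rpowH (1/2)
  set a' := A.rpowH (-(1/2))
  set s := (Φ A).rpowH (1/2)
  set s' := (Φ A).rpowH (-(1/2))
  have hC : (a' * B * a').PosSemidef := by
    have := hB.mul_mul_conjTranspose_same a'
    rwa [aH'.eq] at this
  have hD : (s' * Φ B * s').PosSemidef := by
    have := (hΦ B hB).mul_mul_conjTranspose_same s'
    rwa [sH'.eq] at this
  obtain ⟨c, Q, hc, -, hQ, hQQ, hQ1, hCe, hCr⟩ := aux_spectral _ hC
  obtain ⟨d, P, hd, -, hP, hPP, hP1, hDe, hDr⟩ := aux_spectral _ hD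
  let E : n → Matrix m m ℂ := fun i => s' * Φ (a * Q i * a) * s'
  have hE : ∀ i, (E i).PosSemidef := by
    intro i
    have h1 := (hQ i).mul_mul_conjTranspose_same a
    rw [aH.eq] at h1
    have h2 := (hΦ _ h1).mul_mul_conjTranspose_same s'
    rwa [sH'.eq] at h2
  have hlin : ∀ w : n → ℂ, ∑ i, w i • E i = s' * Φ (a * (∑ i, w i • Q i) * a) * s' := by
    intro w
    simp [E, Finset.mul_sum, Finset.sum_mul]
  have hE1 : ∑ i, E i = 1 := by
    have := hlin (fun _ => 1)
    simp only [one_smul, hQ1, mul_one, a3] at this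
    rw [this]
    calc s' * Φ A * s' = s' * (s * s) * s' := by rw [s3]
      _ = (s' * s) * (s * s') := by noncomm_ring
      _ = 1 := by rw [s1, s2, one_mul]
  have hEP : ∑ i, (c i : ℂ) • E i = ∑ i, (d i : ℂ) • P i := by
    rw [hlin, ← hCe, ← hDe]
    have : a * (a' * B * a') * a = B := by
      calc _ = (a * a') * B * (a' * a) := by noncomm_ring
        _ = B := by rw [a1, a2, one_mul, mul_one]
    rw [this]
  have h := aux_pow β hβ0 hβ1 E c hE hc hE1 P d hP hd hP1 hPP hEP
  rw [← hDr, hlin, ← hCr] at h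
  have h2 := h.mul_mul_conjTranspose_same s
  rw [sH.eq, mul_sub, sub_mul] at h2
  convert h2 using 2
  generalize Φ _ = Z
  calc Z = (s * s') * Z * (s' * s) := by rw [s1, s2, one_mul, mul_one]
    _ = _ := by noncomm_ring
end

section
/- Let α ∈ (1,∞), let ρ be a positive semidefinite complex matrix and σ a positive definite complex matrix of the same size. Then: (i) the matrix A₀ := ‖σ^(−1/2) ρ σ^(−1/2)‖_∞^(α−1) · ρ satisfies ρ ≤ σ #_{1/α} A₀, so the feasible set { A PSD : ρ ≤ σ #_{1/α} A } is nonempty and Q^#_α(ρ‖σ) ≤ ‖σ^(−1/2) ρ σ^(−1/2)‖_∞^(α−1) · tr(ρ); (ii) the infimum defining Q^#_α(ρ‖σ) is attained at some PSD matrix A satisfying A ≤ ‖σ^(−1/2) ρ σ^(−1/2)‖_∞^(α−1) · tr(ρ) · I. Here ‖·‖_∞ denotes the operator norm. -/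
open Matrix Filter
open scoped Kronecker Classical ComplexOrder

namespace QSharpAux

open scoped MatrixOrder Matrix.Norms.L2Operator

section
variable {n : Type*} [Fintype n] [DecidableEq n]

lemma rpowH_eq_cfc {A : Matrix n n ℂ} (hA : A.IsHermitian) (r : ℝ) :
    A.rpowH r = cfc (fun x : ℝ => x ^ r) A := by
  rw [hA.cfc_eq, Matrix.rpowH, dif_pos hA, Matrix.IsHermitian.cfc,
    Unitary.conjStarAlgAut_apply]
  rfl

lemma rpowH_isHermitian {A : Matrix n n ℂ} (hA : A.IsHermitian) (r : ℝ) :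
    (A.rpowH r).IsHermitian := by
  rw [rpowH_eq_cfc hA]
  exact cfc_predicate (R := ℝ) _ A

lemma rpowH_half_mul {σ : Matrix n n ℂ} (hσ : σ.PosDef) :
    σ.rpowH (1/2) * σ.rpowH (-(1/2)) = 1 ∧ σ.rpowH (-(1/2)) * σ.rpowH (1/2) = 1 := by
  have h0 : (0 : Matrix n n ℂ) ≤ σ := Matrix.nonneg_iff_posSemidef.2 hσ.posSemidef
  have hs : IsStrictlyPositive σ := Matrix.isStrictlyPositive_iff_posDef.2 hσ
  rw [rpowH_eq_cfc hσ.1, rpowH_eq_cfc hσ.1, ← CFC.rpow_eq_cfc_real, ← CFC.rpow_eq_cfc_real]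
  exact ⟨CFC.rpow_mul_rpow_neg _, CFC.rpow_neg_mul_rpow _⟩

lemma spectrum_le_norm {A : Matrix n n ℂ} (hA : 0 ≤ A) :
    spectrum ℝ A ⊆ Set.Icc 0 ‖A‖ := by
  intro x hx
  have hsa : IsSelfAdjoint A := IsSelfAdjoint.of_nonneg hA
  refine ⟨spectrum_nonneg_of_nonneg hA hx, ?_⟩
  have h : A ≤ algebraMap ℝ (Matrix n n ℂ) ‖A‖ := hsa.le_algebraMap_norm_self
  exact (le_algebraMap_iff_spectrum_le hsa).1 h x hx

lemma norm_le_trace {A : Matrix n n ℂ} (hA : 0 ≤ A) : ‖A‖ ≤ A.trace.re := by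
  have hp := Matrix.nonneg_iff_posSemidef.1 hA
  have ht : A.trace.re = ∑ i, hp.1.eigenvalues i := by
    rw [hp.1.trace_eq_sum_eigenvalues]; simp
  have h0 : 0 ≤ A.trace.re := by
    rw [ht]; exact Finset.sum_nonneg fun i _ => hp.eigenvalues_nonneg i
  rw [CStarAlgebra.norm_le_iff_le_algebraMap A h0 hA,
    le_algebraMap_iff_spectrum_le (IsSelfAdjoint.of_nonneg hA)]
  intro x hx
  rw [hp.1.spectrum_real_eq_range_eigenvalues] at hx
  obtain ⟨i, rfl⟩ := hx
  rw [ht]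
  exact Finset.single_le_sum (f := hp.1.eigenvalues) (fun i _ => hp.eigenvalues_nonneg i)
    (Finset.mem_univ i)

lemma conj_nonneg {S A : Matrix n n ℂ} (hS : S.IsHermitian) (hA : 0 ≤ A) :
    0 ≤ S * A * S := by
  have := star_left_conjugate_nonneg hA S
  rwa [show star S = S from hS] at this

lemma continuousOn_gmean {σ : Matrix n n ℂ} (hσ : σ.PosDef) {β : ℝ} (hβ : 0 < β) (T : ℝ) :
    ContinuousOn (fun A => Matrix.gmean β σ A) {A : Matrix n n ℂ | 0 ≤ A ∧ ‖A‖ ≤ T} := by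
  set S := σ.rpowH (-(1/2)) with hSdef
  have hS : S.IsHermitian := rpowH_isHermitian hσ.1 _
  have key : ContinuousOn (fun A : Matrix n n ℂ => cfc (fun x : ℝ => x ^ β) (S * A * S))
      {A : Matrix n n ℂ | 0 ≤ A ∧ ‖A‖ ≤ T} := by
    refine ContinuousOn.cfc' (isCompact_Icc (a := (0:ℝ)) (b := ‖S‖ * T * ‖S‖)) _ ?_ ?_ ?_ ?_
    · exact ((continuous_const.matrix_mul continuous_id).matrix_mul continuous_const).continuousOn
    · rintro A ⟨hA, hAT⟩
      refine (spectrum_le_norm (conj_nonneg hS hA)).trans (Set.Icc_subset_Icc_right ?_)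
      calc ‖S * A * S‖ ≤ ‖S * A‖ * ‖S‖ := norm_mul_le _ _
        _ ≤ ‖S‖ * ‖A‖ * ‖S‖ := by gcongr; exact norm_mul_le _ _
        _ ≤ _ := by gcongr
    · rintro A ⟨hA, hAT⟩
      exact IsSelfAdjoint.of_nonneg (conj_nonneg hS hA)
    · exact (Real.continuous_rpow_const hβ.le).continuousOn
  have : ContinuousOn (fun A : Matrix n n ℂ => σ.rpowH (1/2) *
      cfc (fun x : ℝ => x ^ β) (S * A * S) * σ.rpowH (1/2))
      {A : Matrix n n ℂ | 0 ≤ A ∧ ‖A‖ ≤ T} :=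
    (continuousOn_const.mul key).mul continuousOn_const
  refine this.congr ?_
  rintro A ⟨hA, -⟩
  have hh : (S * A * S).IsHermitian := IsSelfAdjoint.of_nonneg (conj_nonneg hS hA)
  simp only [Matrix.gmean]
  rw [← hSdef, rpowH_eq_cfc hh]

lemma le_rpow_aux {X : Matrix n n ℂ} (hX : 0 ≤ X) {α : ℝ} (hα : 1 < α) :
    X ≤ (((‖X‖ ^ (α-1) : ℝ) : ℂ) • X).rpowH (1/α) := by
  have hsa : IsSelfAdjoint X := IsSelfAdjoint.of_nonneg hX
  have hc : 0 ≤ ‖X‖ ^ (α - 1) := by positivity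
  have e : (((‖X‖ ^ (α-1) : ℝ) : ℂ) • X) = cfc (fun x : ℝ => ‖X‖ ^ (α-1) * x) X := by
    rw [cfc_const_mul _ _ X, cfc_id' ℝ X]
    ext i j; simp
  have hh : (((‖X‖ ^ (α-1) : ℝ) : ℂ) • X).IsHermitian := by
    rw [e]; exact cfc_predicate (R := ℝ) _ X
  have hc1 : ContinuousOn (fun x : ℝ => x ^ (1/α))
      ((fun x : ℝ => ‖X‖ ^ (α-1) * x) '' spectrum ℝ X) :=
    (Real.continuous_rpow_const (by positivity)).continuousOn
  rw [rpowH_eq_cfc hh, e, ← cfc_comp' (fun x : ℝ => x ^ (1/α)) _ X hc1]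
  conv_lhs => rw [← cfc_id' ℝ X]
  have hc2 : ContinuousOn (fun x : ℝ => (‖X‖ ^ (α-1) * x) ^ (1/α)) (spectrum ℝ X) :=
    ((Real.continuous_rpow_const (by positivity)).comp
      (continuous_const.mul continuous_id)).continuousOn
  refine cfc_mono (fun x hx => ?_) continuousOn_id hc2
  obtain ⟨h0, h1⟩ := spectrum_le_norm hX hx
  calc x = (x ^ α) ^ (1/α) := by
        rw [← Real.rpow_mul h0, mul_one_div_cancel (by positivity), Real.rpow_one]
    _ ≤ _ := by
      apply Real.rpow_le_rpow (by positivity) _ (by positivity)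
      calc x ^ α = x ^ (α - 1) * x := by
            rw [← Real.rpow_add_one' h0 (by linarith)]; congr 1; ring
        _ ≤ _ := by gcongr

lemma opNorm_eq (X : Matrix n n ℂ) : opNorm X = ‖X‖ := rfl

lemma feasible_aux {R S ρ Y : Matrix n n ℂ} (hR : R.IsHermitian) (h1 : R * S = 1)
    (h2 : S * R = 1) (h : S * ρ * S ≤ Y) : (R * Y * R - ρ).PosSemidef := by
  have h' : 0 ≤ R * (Y - S * ρ * S) * R := conj_nonneg hR (sub_nonneg.2 h)
  have e : R * (Y - S * ρ * S) * R = R * Y * R - ρ := by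
    have : R * (S * ρ * S) * R = (R * S) * ρ * (S * R) := by simp only [Matrix.mul_assoc]
    rw [Matrix.mul_sub, Matrix.sub_mul, this, h1, h2, Matrix.one_mul, Matrix.mul_one]
  rw [e] at h'
  exact Matrix.nonneg_iff_posSemidef.1 h'

lemma feasible {α : ℝ} (hα : 1 < α) {ρ σ : Matrix n n ℂ} (hρ : ρ.PosSemidef) (hσ : σ.PosDef) :
    (Matrix.gmean (1/α) σ
        (((opNorm (σ.rpowH (-(1/2)) * ρ * σ.rpowH (-(1/2))) ^ (α-1) : ℝ) : ℂ) • ρ)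
      - ρ).PosSemidef := by
  have hS := rpowH_isHermitian hσ.1 (-(1/2))
  have hR := rpowH_isHermitian hσ.1 (1/2)
  obtain ⟨h1, h2⟩ := rpowH_half_mul hσ
  have hX := conj_nonneg hS (Matrix.nonneg_iff_posSemidef.2 hρ)
  rw [Matrix.gmean, Matrix.mul_smul, Matrix.smul_mul, opNorm_eq]
  exact feasible_aux hR h1 h2 (le_rpow_aux hX hα)

lemma attained {α : ℝ} (hα : 1 < α) {ρ σ A₀ : Matrix n n ℂ} (hσ : σ.PosDef)
    (hA₀ : A₀.PosSemidef) (hf : (Matrix.gmean (1/α) σ A₀ - ρ).PosSemidef) :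
    QSharp α ρ σ ≤ A₀.trace.re ∧ ∃ A : Matrix n n ℂ, A.PosSemidef ∧
      (Matrix.gmean (1/α) σ A - ρ).PosSemidef ∧
      A.trace.re = QSharp α ρ σ ∧
      (((A₀.trace.re : ℝ) : ℂ) • (1 : Matrix n n ℂ) - A).PosSemidef := by
  set T := A₀.trace.re with hT
  have hbdd : BddBelow { t : ℝ | ∃ A : Matrix n n ℂ, A.PosSemidef ∧
    (Matrix.gmean (1/α) σ A - ρ).PosSemidef ∧ t = A.trace.re } := by
    refine ⟨0, ?_⟩
    rintro t ⟨A, hA, -, rfl⟩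
    exact (Complex.le_def.1 hA.trace_nonneg).1
  refine ⟨csInf_le hbdd ⟨A₀, hA₀, hf, rfl⟩, ?_⟩
  set C := {A : Matrix n n ℂ | 0 ≤ A ∧ ‖A‖ ≤ T} with hC
  have hCclosed : IsClosed C :=
    (CStarAlgebra.isClosed_nonneg (A := Matrix n n ℂ)).inter
      (isClosed_le continuous_norm continuous_const)
  set K := C ∩ (fun A => Matrix.gmean (1/α) σ A - ρ) ⁻¹' {B | 0 ≤ B} with hK
  have hKclosed : IsClosed K :=
    ((continuousOn_gmean hσ (by positivity) T).sub continuousOn_const).preimage_isClosed_of_isClosed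
      hCclosed CStarAlgebra.isClosed_nonneg
  have : ProperSpace (Matrix n n ℂ) := FiniteDimensional.proper ℂ _
  have hKcomp : IsCompact K :=
    (isCompact_closedBall (0 : Matrix n n ℂ) T).of_isClosed_subset hKclosed
      (fun A hA => by simpa using hA.1.2)
  have mem : ∀ A : Matrix n n ℂ, A.PosSemidef → (Matrix.gmean (1/α) σ A - ρ).PosSemidef →
      A.trace.re ≤ T → A ∈ K := fun A h1 h2 h3 =>
    ⟨⟨Matrix.nonneg_iff_posSemidef.2 h1,
      (norm_le_trace (Matrix.nonneg_iff_posSemidef.2 h1)).trans h3⟩,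
      Matrix.nonneg_iff_posSemidef.2 h2⟩
  have hA₀K := mem A₀ hA₀ hf le_rfl
  have hcont : Continuous (fun A : Matrix n n ℂ => A.trace.re) :=
    Complex.continuous_re.comp (Continuous.matrix_trace continuous_id)
  obtain ⟨A, hAK, hmin⟩ := hKcomp.exists_isMinOn ⟨A₀, hA₀K⟩ hcont.continuousOn
  have hAp := Matrix.nonneg_iff_posSemidef.1 hAK.1.1
  have hAf := Matrix.nonneg_iff_posSemidef.1 hAK.2
  refine ⟨A, hAp, hAf, ?_, ?_⟩
  · apply le_antisymm
    · refine le_csInf ⟨_, A₀, hA₀, hf, rfl⟩ ?_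
      rintro t ⟨B, hB, hBf, rfl⟩
      rcases le_total B.trace.re T with h | h
      · exact hmin (mem B hB hBf h)
      · exact (hmin hA₀K).trans h
    · exact csInf_le hbdd ⟨A, hAp, hAf, rfl⟩
  · have h0 : 0 ≤ T := (norm_nonneg _).trans hAK.1.2
    have h := (CStarAlgebra.norm_le_iff_le_algebraMap A h0 hAK.1.1).1 hAK.1.2
    rw [Matrix.le_iff] at h
    refine (congrArg (fun B : Matrix n n ℂ => (B - A).PosSemidef) ?_).mpr h
    rw [Algebra.algebraMap_eq_smul_one]
    ext i j; simp

end
end QSharpAux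

/-- feasibility and attainment for the convex program defining
Q^#_α(ρ‖σ). -/
theorem QSharp_feasible_and_attained
    {n : Type*} [Fintype n] [DecidableEq n]
    (α : ℝ) (hα : 1 < α)
    (ρ σ : Matrix n n ℂ) (hρ : ρ.PosSemidef) (hσ : σ.PosDef) :
    -- (i) A₀ := ‖σ^(−1/2) ρ σ^(−1/2)‖_∞^(α−1) • ρ is feasible
    (Matrix.gmean (1/α) σ
        (((opNorm (σ.rpowH (-(1/2)) * ρ * σ.rpowH (-(1/2))) ^ (α-1) : ℝ) : ℂ) • ρ)
      - ρ).PosSemidef ∧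
    QSharp α ρ σ ≤ opNorm (σ.rpowH (-(1/2)) * ρ * σ.rpowH (-(1/2))) ^ (α-1) * ρ.trace.re ∧
    -- (ii) the infimum is attained at some A with A ≤ ‖σ^(−1/2) ρ σ^(−1/2)‖_∞^(α−1) · tr(ρ) · I
    ∃ A : Matrix n n ℂ, A.PosSemidef ∧
      (Matrix.gmean (1/α) σ A - ρ).PosSemidef ∧
      A.trace.re = QSharp α ρ σ ∧
      ((((opNorm (σ.rpowH (-(1/2)) * ρ * σ.rpowH (-(1/2))) ^ (α-1) * ρ.trace.re : ℝ)) : ℂ)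
          • (1 : Matrix n n ℂ) - A).PosSemidef := by
  have hf := QSharpAux.feasible hα hρ hσ
  have hc : 0 ≤ opNorm (σ.rpowH (-(1/2)) * ρ * σ.rpowH (-(1/2))) ^ (α-1) :=
    Real.rpow_nonneg (norm_nonneg _) _
  have hA₀ := hρ.smul (Complex.zero_le_real.2 hc)
  have h := QSharpAux.attained hα hσ hA₀ hf
  rw [Matrix.trace_smul, smul_eq_mul, Complex.re_ofReal_mul] at h
  exact ⟨hf, h⟩
end

section
/- Let α ∈ (1,∞), let ρ be a nonzero positive semidefinite complex matrix and σ a positive definite complex matrix of the same size. Then D^M_α(ρ‖σ) ≤ D^#_α(ρ‖σ) ≤ D^M_α(ρ‖σ) + (α/(α−1)) · log₂ |spec(σ)|, where |spec(σ)| is the number of distinct eigenvalues of σ. -/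
open Matrix Filter
open scoped Kronecker Classical ComplexOrder

/-- Measured Rényi divergence of order α: supremum over orthonormal bases. -/
noncomputable def DMeas {n : Type*} [Fintype n] [DecidableEq n]
    (α : ℝ) (ρ σ : Matrix n n ℂ) : ℝ :=
  sSup { t : ℝ | ∃ v : n → n → ℂ,
    (∀ i j, star (v i) ⬝ᵥ v j = if i = j then 1 else 0) ∧
    t = 1/(α-1) * Real.logb 2
      (∑ x, ((star (v x) ⬝ᵥ ρ *ᵥ v x).re) ^ α * ((star (v x) ⬝ᵥ σ *ᵥ v x).re) ^ (1-α)) }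

namespace DAux

set_option linter.unusedSectionVars false

variable {n : Type*} [Fintype n] [DecidableEq n]

/-- Functional calculus is independent of the diagonalization. -/
lemma fc_unique (U V : Matrix n n ℂ) (hU : Uᴴ * U = 1) (hV : Vᴴ * V = 1)
    (a b : n → ℝ) (f : ℝ → ℝ)
    (h : U * diagonal (fun i => (a i : ℂ)) * Uᴴ = V * diagonal (fun i => (b i : ℂ)) * Vᴴ) :
    U * diagonal (fun i => (f (a i) : ℂ)) * Uᴴ = V * diagonal (fun i => (f (b i) : ℂ)) * Vᴴ := by
  have hU' : U * Uᴴ = 1 := mul_eq_one_comm.mp hU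
  have hV' : V * Vᴴ = 1 := mul_eq_one_comm.mp hV
  have h1 : (Vᴴ * U) * diagonal (fun i => (a i : ℂ)) = diagonal (fun i => (b i : ℂ)) * (Vᴴ * U) := by
    calc (Vᴴ * U) * diagonal (fun i => (a i : ℂ))
        = Vᴴ * (U * diagonal (fun i => (a i : ℂ)) * Uᴴ) * U := by
          simp only [Matrix.mul_assoc, hU, Matrix.mul_one]
      _ = (Vᴴ * V) * (diagonal (fun i => (b i : ℂ)) * (Vᴴ * U)) := by
          rw [h]; simp only [Matrix.mul_assoc]
      _ = _ := by rw [hV, Matrix.one_mul]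
  have h2 : (Vᴴ * U) * diagonal (fun i => (f (a i) : ℂ))
      = diagonal (fun i => (f (b i) : ℂ)) * (Vᴴ * U) := by
    ext i j
    have := congrFun (congrFun h1 i) j
    rw [mul_diagonal, diagonal_mul] at this ⊢
    by_cases h0 : (Vᴴ * U) i j = 0
    · simp [h0]
    · have : (a j : ℂ) = b i := by
        rw [mul_comm] at this
        exact mul_right_cancel₀ h0 this
      have : a j = b i := by exact_mod_cast this
      rw [this, mul_comm]
  calc U * diagonal (fun i => (f (a i) : ℂ)) * Uᴴ
      = (V * Vᴴ) * U * diagonal (fun i => (f (a i) : ℂ)) * Uᴴ := by rw [hV', Matrix.one_mul]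
    _ = V * ((Vᴴ * U) * diagonal (fun i => (f (a i) : ℂ))) * Uᴴ := by
        simp only [Matrix.mul_assoc]
    _ = V * diagonal (fun i => (f (b i) : ℂ)) * Vᴴ * (U * Uᴴ) := by
        rw [h2]; simp only [Matrix.mul_assoc]
    _ = _ := by rw [hU', Matrix.mul_one]

lemma conj_diag_herm (V : Matrix n n ℂ) (a : n → ℝ) :
    (V * diagonal (fun i => (a i : ℂ)) * Vᴴ).IsHermitian := by
  have : (diagonal (fun i => (a i : ℂ)))ᴴ = diagonal (fun i => (a i : ℂ)) := by
    rw [diagonal_conjTranspose]; congr 1; ext i; simp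
  rw [IsHermitian, conjTranspose_mul, conjTranspose_mul, conjTranspose_conjTranspose, this,
    Matrix.mul_assoc]

lemma exists_diag (A : Matrix n n ℂ) (hA : A.IsHermitian) :
    ∃ V : Matrix n n ℂ, Vᴴ * V = 1 ∧
      A = V * diagonal (fun i => (hA.eigenvalues i : ℂ)) * Vᴴ := by
  refine ⟨hA.eigenvectorUnitary, ?_, ?_⟩
  · exact Unitary.coe_star_mul_self hA.eigenvectorUnitary
  · have := hA.spectral_theorem
    rw [Unitary.conjStarAlgAut_apply] at this
    exact this

lemma rpowH_conj (V : Matrix n n ℂ) (hV : Vᴴ * V = 1) (a : n → ℝ) (r : ℝ) :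
    (V * diagonal (fun i => (a i : ℂ)) * Vᴴ).rpowH r
      = V * diagonal (fun i => ((a i ^ r : ℝ) : ℂ)) * Vᴴ := by
  have hA := conj_diag_herm V a
  rw [rpowH, dif_pos hA]
  refine fc_unique _ V (Unitary.coe_star_mul_self hA.eigenvectorUnitary) hV _ a (fun x => x ^ r) ?_
  have := hA.spectral_theorem
  rw [Unitary.conjStarAlgAut_apply] at this
  exact this.symm

lemma conj_mul (V : Matrix n n ℂ) (hV : Vᴴ * V = 1) (D E : Matrix n n ℂ) :
    (V * D * Vᴴ) * (V * E * Vᴴ) = V * (D * E) * Vᴴ := by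
  calc (V * D * Vᴴ) * (V * E * Vᴴ) = V * D * (Vᴴ * V) * (E * Vᴴ) := by
        simp only [Matrix.mul_assoc]
    _ = _ := by rw [hV]; simp only [Matrix.mul_assoc, Matrix.one_mul, Matrix.mul_one]

lemma holder (α : ℝ) (hα : 1 < α) (c x : n → ℝ) (hc : ∀ i, 0 ≤ c i) (hx : ∀ i, 0 ≤ x i) :
    ∑ i, c i * x i ^ (1/α) ≤ (∑ i, c i) ^ (1 - 1/α) * (∑ i, c i * x i) ^ (1/α) := by
  have h := Real.inner_le_weight_mul_Lp_of_nonneg Finset.univ (p := α) hα.le c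
    (fun i => x i ^ (1/α)) hc (fun i => Real.rpow_nonneg (hx i) _)
  have : ∀ i, (x i ^ (1/α)) ^ α = x i := fun i => by
    rw [← Real.rpow_mul (hx i), one_div, inv_mul_cancel₀ (by linarith), Real.rpow_one]
  simp only [this] at h
  simpa [one_div] using h

lemma quad_conj (W M : Matrix n n ℂ) (v : n → ℂ) :
    star v ⬝ᵥ (Wᴴ * M * W) *ᵥ v = star (W *ᵥ v) ⬝ᵥ M *ᵥ (W *ᵥ v) := by
  rw [star_mulVec, ← dotProduct_mulVec, mulVec_mulVec, mulVec_mulVec]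

lemma quad_diag (a : n → ℝ) (w : n → ℂ) :
    (star w ⬝ᵥ diagonal (fun i => (a i : ℂ)) *ᵥ w).re = ∑ i, Complex.normSq (w i) * a i := by
  rw [dotProduct, Complex.re_sum]
  refine Finset.sum_congr rfl fun i _ => ?_
  rw [mulVec_diagonal, Pi.star_apply]
  simp [Complex.normSq_apply]
  ring

/-- quadratic form of the geometric mean -/
lemma gmean_quad (α : ℝ) (hα : 1 < α) (σ A : Matrix n n ℂ) (hσ : σ.PosDef) (hA : A.PosSemidef)
    (v : n → ℂ) :
    (star v ⬝ᵥ (gmean (1/α) σ A) *ᵥ v).re ≤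
      (star v ⬝ᵥ σ *ᵥ v).re ^ (1 - 1/α) * (star v ⬝ᵥ A *ᵥ v).re ^ (1/α) := by
  obtain ⟨U, hU, hσU⟩ := exists_diag σ hσ.1
  set s := hσ.1.eigenvalues with hs
  have hspos : ∀ i, 0 < s i := hσ.eigenvalues_pos
  have hU' : U * Uᴴ = 1 := mul_eq_one_comm.mp hU
  set S := σ.rpowH (1/2) with hS
  set T := σ.rpowH (-(1/2)) with hT
  have hS1 : S = U * diagonal (fun i => ((s i ^ (1/2 : ℝ) : ℝ) : ℂ)) * Uᴴ := by
    rw [hS]; conv_lhs => rw [hσU]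
    exact rpowH_conj U hU s _
  have hT1 : T = U * diagonal (fun i => ((s i ^ (-(1/2) : ℝ) : ℝ) : ℂ)) * Uᴴ := by
    rw [hT]; conv_lhs => rw [hσU]
    exact rpowH_conj U hU s _
  have hSH : Sᴴ = S := by rw [hS1]; exact conj_diag_herm U _
  have hTH : Tᴴ = T := by rw [hT1]; exact conj_diag_herm U _
  have hTS : T * S = 1 := by
    rw [hS1, hT1, conj_mul U hU, diagonal_mul_diagonal]
    have : (fun i => ((s i ^ (-(1/2) : ℝ) : ℝ) : ℂ) * ((s i ^ (1/2 : ℝ) : ℝ) : ℂ)) = fun _ => 1 := by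
      ext i
      rw [← Complex.ofReal_mul, ← Real.rpow_add (hspos i)]; norm_num
    rw [this, diagonal_one, Matrix.mul_one, hU']
  have hST : S * T = 1 := mul_eq_one_comm.mp hTS
  have hSS : S * S = σ := by
    rw [hS1, conj_mul U hU, diagonal_mul_diagonal]
    conv_rhs => rw [hσU]
    congr 3
    ext i
    rw [← Complex.ofReal_mul, ← Real.rpow_add (hspos i)]; norm_num
  set X := T * A * T with hX
  have hXp : X.PosSemidef := by
    have := hA.conjTranspose_mul_mul_same T
    rwa [hTH] at this
  obtain ⟨W, hW, hXW⟩ := exists_diag X hXp.1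
  set x := hXp.1.eigenvalues with hx
  have hxn : ∀ i, 0 ≤ x i := hXp.eigenvalues_nonneg
  have hW' : W * Wᴴ = 1 := mul_eq_one_comm.mp hW
  have hXr : X.rpowH (1/α) = W * diagonal (fun i => ((x i ^ (1/α) : ℝ) : ℂ)) * Wᴴ := by
    conv_lhs => rw [hXW]
    exact rpowH_conj W hW x _
  set w := (Wᴴ * S) *ᵥ v with hw
  have hWS : (Wᴴ * S)ᴴ = S * W := by rw [conjTranspose_mul, hSH, conjTranspose_conjTranspose]
  have e1 : (star v ⬝ᵥ (gmean (1/α) σ A) *ᵥ v).re = ∑ i, Complex.normSq (w i) * x i ^ (1/α) := by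
    rw [← quad_diag (fun i => x i ^ (1/α)), hw, ← quad_conj, hWS, gmean, ← hX, hXr, ← hS]
    simp only [Matrix.mul_assoc]
  have e2 : (star v ⬝ᵥ A *ᵥ v).re = ∑ i, Complex.normSq (w i) * x i := by
    rw [← quad_diag x, hw, ← quad_conj, hWS]
    have : S * W * diagonal (fun i => (x i : ℂ)) * (Wᴴ * S) = A := by
      calc _ = S * (W * diagonal (fun i => (x i : ℂ)) * Wᴴ) * S := by
            simp only [Matrix.mul_assoc]
        _ = (S * T) * A * (T * S) := by rw [← hXW, hX]; simp only [Matrix.mul_assoc]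
        _ = A := by rw [hST, hTS, Matrix.one_mul, Matrix.mul_one]
    rw [this]
  have e3 : (star v ⬝ᵥ σ *ᵥ v).re = ∑ i, Complex.normSq (w i) := by
    have h1 := quad_diag (fun _ => 1) w
    simp only [mul_one] at h1
    rw [← h1, hw, ← quad_conj, hWS]
    have : S * W * diagonal (fun _ => ((1:ℝ) : ℂ)) * (Wᴴ * S) = σ := by
      have : (diagonal (fun _ => ((1:ℝ) : ℂ)) : Matrix n n ℂ) = 1 := by simp
      rw [this, Matrix.mul_one]
      calc _ = S * (W * Wᴴ) * S := by simp only [Matrix.mul_assoc]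
        _ = σ := by rw [hW', Matrix.mul_one, hSS]
    rw [this]
  rw [e1, e2, e3]
  exact holder α hα _ _ (fun i => Complex.normSq_nonneg _) hxn

lemma quad_nonneg {A : Matrix n n ℂ} (hA : A.PosSemidef) (v : n → ℂ) :
    0 ≤ (star v ⬝ᵥ A *ᵥ v).re := by
  have := hA.dotProduct_mulVec_nonneg v
  exact (Complex.le_def.mp this).1

lemma quad_pos {A : Matrix n n ℂ} (hA : A.PosDef) (v : n → ℂ) (hv : v ≠ 0) :
    0 < (star v ⬝ᵥ A *ᵥ v).re := by
  have := hA.dotProduct_mulVec_pos hv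
  exact (Complex.lt_def.mp this).1

lemma quad_entry (V M : Matrix n n ℂ) (x y : n) :
    (Vᴴ * M * V) x y = star (Vᵀ x) ⬝ᵥ M *ᵥ (Vᵀ y) := by
  rw [Matrix.mul_assoc, Matrix.mul_apply, dotProduct]
  rfl

/-- orthonormal families are unitary -/
lemma onb_unitary (v : n → n → ℂ)
    (hv : ∀ i j, star (v i) ⬝ᵥ v j = if i = j then 1 else 0) :
    ((Matrix.of v)ᵀ)ᴴ * (Matrix.of v)ᵀ = 1 := by
  ext i j
  rw [Matrix.one_apply, ← hv i j, Matrix.mul_apply, dotProduct]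
  rfl

lemma sum_quad (v : n → n → ℂ)
    (hv : ∀ i j, star (v i) ⬝ᵥ v j = if i = j then 1 else 0) (M : Matrix n n ℂ) :
    ∑ x, (star (v x) ⬝ᵥ M *ᵥ v x).re = M.trace.re := by
  have h := onb_unitary v hv
  have h' := mul_eq_one_comm.mp h
  have : M.trace = (((Matrix.of v)ᵀ)ᴴ * M * (Matrix.of v)ᵀ).trace := by
    rw [Matrix.trace_mul_comm, ← Matrix.mul_assoc, h', Matrix.one_mul]
  rw [this, Matrix.trace, Complex.re_sum]
  refine Finset.sum_congr rfl fun x _ => ?_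
  rw [diag_apply, quad_entry]
  rfl

lemma onb_ne_zero (v : n → n → ℂ)
    (hv : ∀ i j, star (v i) ⬝ᵥ v j = if i = j then 1 else 0) (x : n) : v x ≠ 0 := by
  intro h
  have := hv x x
  simp [h] at this

lemma sum_le_trace (α : ℝ) (hα : 1 < α)
    (ρ σ : Matrix n n ℂ) (hρ : ρ.PosSemidef) (hσ : σ.PosDef)
    (v : n → n → ℂ) (hv : ∀ i j, star (v i) ⬝ᵥ v j = if i = j then 1 else 0)
    (A : Matrix n n ℂ) (hA : A.PosSemidef) (hle : (gmean (1/α) σ A - ρ).PosSemidef) :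
    (∑ x, ((star (v x) ⬝ᵥ ρ *ᵥ v x).re) ^ α * ((star (v x) ⬝ᵥ σ *ᵥ v x).re) ^ (1-α))
      ≤ A.trace.re := by
  rw [← sum_quad v hv A]
  refine Finset.sum_le_sum fun x _ => ?_
  have h1 := quad_nonneg hle (v x)
  rw [sub_mulVec, dotProduct_sub, Complex.sub_re] at h1
  have h2 := gmean_quad α hα σ A hσ hA (v x)
  have hr := quad_nonneg hρ (v x)
  have ha := quad_nonneg hA (v x)
  have hs := quad_pos hσ (v x) (onb_ne_zero v hv x)
  generalize (star (v x) ⬝ᵥ ρ *ᵥ v x).re = r at *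
  generalize (star (v x) ⬝ᵥ σ *ᵥ v x).re = s at *
  generalize (star (v x) ⬝ᵥ A *ᵥ v x).re = a at *
  have h3 : r ^ α ≤ (s ^ (1 - 1/α) * a ^ (1/α)) ^ α :=
    Real.rpow_le_rpow hr (by linarith) (by linarith)
  have hα0 : α ≠ 0 := by linarith
  rw [Real.mul_rpow (by positivity) (by positivity), ← Real.rpow_mul hs.le, ← Real.rpow_mul ha,
    one_div, inv_mul_cancel₀ hα0, Real.rpow_one] at h3
  have h4 : (1 - α⁻¹) * α = α - 1 := by field_simp
  rw [h4] at h3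
  calc r ^ α * s ^ (1 - α) ≤ s ^ (α - 1) * a * s ^ (1 - α) := by gcongr
    _ = (s ^ (α - 1) * s ^ (1 - α)) * a := by ring
    _ = a := by rw [← Real.rpow_add hs]; norm_num

lemma sum_pos (α : ℝ) 
    (ρ σ : Matrix n n ℂ) (hρ : ρ.PosSemidef) (hρ0 : ρ ≠ 0) (hσ : σ.PosDef)
    (v : n → n → ℂ) (hv : ∀ i j, star (v i) ⬝ᵥ v j = if i = j then 1 else 0) :
    0 < ∑ x, ((star (v x) ⬝ᵥ ρ *ᵥ v x).re) ^ α * ((star (v x) ⬝ᵥ σ *ᵥ v x).re) ^ (1-α) := by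
  have htr : 0 < ρ.trace.re := by
    have h0 := Complex.le_def.mp hρ.trace_nonneg
    refine lt_of_le_of_ne h0.1 fun h => hρ0 ?_
    apply (hρ.trace_eq_zero_iff).mp
    exact (Complex.ext h h0.2).symm
  rw [← sum_quad v hv ρ] at htr
  obtain ⟨x, -, hx⟩ := Finset.exists_lt_of_sum_lt (s := Finset.univ) (f := fun _ : n => (0:ℝ))
    (g := fun x => (star (v x) ⬝ᵥ ρ *ᵥ v x).re) (by simpa using htr)
  refine Finset.sum_pos' (fun y _ => ?_) ⟨x, Finset.mem_univ _, ?_⟩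
  · have := quad_nonneg hρ (v y)
    have := quad_pos hσ (v y) (onb_ne_zero v hv y)
    positivity
  · have := quad_pos hσ (v x) (onb_ne_zero v hv x)
    positivity

/-- adapted basis -/
lemma exists_adapted (ρ σ : Matrix n n ℂ) (hρ : ρ.IsHermitian) (hσ : σ.IsHermitian) :
    ∃ (V : Matrix n n ℂ) (s : n → ℝ), Vᴴ * V = 1 ∧
      σ = V * diagonal (fun i => (s i : ℂ)) * Vᴴ ∧
      (∀ x y, x ≠ y → s x = s y → (Vᴴ * ρ * V) x y = 0) ∧
      ∀ i, (s i : ℂ) ∈ spectrum ℂ σ := by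
  obtain ⟨U, hU, hσU⟩ := exists_diag σ hσ
  set d := hσ.eigenvalues with hd
  set R := Uᴴ * ρ * U with hR
  have hRH : R.IsHermitian := isHermitian_conjTranspose_mul_mul U hρ
  have hB : ∀ k : ℝ, (R.submatrix (Subtype.val : {i // d i = k} → n) Subtype.val).IsHermitian :=
    fun k => hRH.submatrix _
  choose Y hY hYd using fun k => exists_diag _ (hB k)
  -- the block-diagonal unitary
  let W : Matrix n n ℂ := fun i j => if h : d i = d j then Y (d j) ⟨i, h⟩ ⟨j, rfl⟩ else 0
  have hW0 : ∀ i j, d i ≠ d j → W i j = 0 := fun i j h => dif_neg h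
  have hW1 : ∀ k (i j : {i // d i = k}), W i j = Y k i j := by
    rintro k ⟨i, hi⟩ ⟨j, rfl⟩
    exact dif_pos hi
  have hsum : ∀ (k : ℝ) (g : n → ℂ), (∀ i, d i ≠ k → g i = 0) →
      ∑ i, g i = ∑ i : {i // d i = k}, g i := by
    intro k g hg
    rw [← Fintype.sum_subtype_add_sum_subtype (fun i => d i = k) g]
    rw [Finset.sum_eq_zero (s := (Finset.univ : Finset {i // ¬ d i = k}))
      (fun i _ => hg i i.2), add_zero]
  have hWW : Wᴴ * W = 1 := by
    ext i j
    rw [Matrix.mul_apply]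
    simp only [conjTranspose_apply]
    by_cases hij : d i = d j
    · rw [hsum (d j) _ (fun k hk => by rw [hW0 k j hk, mul_zero])]
      have h1 := congrFun (congrFun (hY (d j)) ⟨i, hij⟩) ⟨j, rfl⟩
      rw [Matrix.mul_apply] at h1
      simp only [conjTranspose_apply, ← hW1] at h1
      rw [h1, Matrix.one_apply, Matrix.one_apply]
      simp
    · rw [Matrix.one_apply_ne (fun h => hij (by rw [h]))]
      refine Finset.sum_eq_zero fun k _ => ?_
      by_cases hk : d k = d j
      · rw [hW0 k i (fun h => hij (by rw [← h, hk])), star_zero, zero_mul]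
      · rw [hW0 k j hk, mul_zero]
  have hWW' : W * Wᴴ = 1 := mul_eq_one_comm.mp hWW
  have hWD : W * diagonal (fun i => (d i : ℂ)) = diagonal (fun i => (d i : ℂ)) * W := by
    ext i j
    rw [mul_diagonal, diagonal_mul]
    by_cases hij : d i = d j
    · rw [hij, mul_comm]
    · rw [hW0 i j hij, zero_mul, mul_zero]
  refine ⟨U * W, d, ?_, ?_, ?_, ?_⟩
  · calc (U * W)ᴴ * (U * W) = Wᴴ * (Uᴴ * U) * W := by
          rw [conjTranspose_mul]; simp only [Matrix.mul_assoc]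
      _ = 1 := by rw [hU, Matrix.mul_one, hWW]
  · calc σ = U * diagonal (fun i => (d i : ℂ)) * Uᴴ := hσU
      _ = U * (diagonal (fun i => (d i : ℂ)) * (W * Wᴴ)) * Uᴴ := by rw [hWW', Matrix.mul_one]
      _ = U * (W * diagonal (fun i => (d i : ℂ)) * Wᴴ) * Uᴴ := by
          rw [hWD]; simp only [Matrix.mul_assoc]
      _ = _ := by rw [conjTranspose_mul]; simp only [Matrix.mul_assoc]
  · intro x y hxy hd'
    have e : (U * W)ᴴ * ρ * (U * W) = Wᴴ * R * W := by
      rw [conjTranspose_mul, hR]; simp only [Matrix.mul_assoc]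
    rw [e, Matrix.mul_apply, hsum (d y) _ (fun k hk => by rw [hW0 k y hk, mul_zero])]
    have h1 : ∀ k, (Wᴴ * R) x k = ∑ l : {l // d l = d y}, star (W l x) * R l k := by
      intro k
      rw [Matrix.mul_apply]
      simp only [conjTranspose_apply]
      exact hsum (d y) _ (fun l hl => by rw [hW0 l x (by rwa [hd']), star_zero, zero_mul])
    simp only [h1]
    have h2 : (Y (d y))ᴴ * (R.submatrix (Subtype.val : {i // d i = d y} → n) Subtype.val) * Y (d y)
        = diagonal (fun i => ((hB (d y)).eigenvalues i : ℂ)) := by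
      conv_lhs => rw [hYd (d y)]
      calc _ = ((Y (d y))ᴴ * Y (d y)) * diagonal (fun i => ((hB (d y)).eigenvalues i : ℂ))
            * ((Y (d y))ᴴ * Y (d y)) := by simp only [Matrix.mul_assoc]
        _ = _ := by rw [hY, Matrix.one_mul, Matrix.mul_one]
    have h3 := congrFun (congrFun h2 ⟨x, hd'⟩) ⟨y, rfl⟩
    rw [Matrix.mul_apply, diagonal_apply_ne _ (by simpa using hxy)] at h3
    simp only [Matrix.mul_apply, conjTranspose_apply, submatrix_apply, ← hW1] at h3
    exact h3
  · intro i
    rw [hσ.spectrum_eq_image_range]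
    exact ⟨d i, ⟨i, rfl⟩, rfl⟩

/-- The pinching inequality. -/
lemma pinching (M : Matrix n n ℂ) (hM : M.PosSemidef) (s : n → ℝ)
    (h0 : ∀ x y, x ≠ y → s x = s y → M x y = 0) :
    (diagonal (fun i => (((Finset.univ.image s).card : ℝ) * (M i i).re : ℝ) : n → ℂ) - M).PosSemidef := by
  set S := Finset.univ.image s with hS
  let E : ℝ → Matrix n n ℂ := fun k => diagonal (fun i => if s i = k then 1 else 0)
  have key : diagonal (fun i => ((((S.card : ℝ) * (M i i).re : ℝ)) : ℂ)) - M
      = (1/2 : ℝ) • ∑ k ∈ S, ∑ l ∈ S, (E k - E l)ᴴ * M * (E k - E l) := by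
    ext x y
    have hx : s x ∈ S := by simp [hS]
    have hy : s y ∈ S := by simp [hS]
    have hE : ∀ k l, ((E k - E l)ᴴ * M * (E k - E l)) x y
        = M x y * (((if s x = k then 1 else 0) - (if s x = l then 1 else 0)) *
          ((if s y = k then 1 else 0) - (if s y = l then 1 else 0))) := by
      intro k l
      have : E k - E l = diagonal (fun i => (if s i = k then 1 else 0) - (if s i = l then 1 else 0)) := by
        simp only [E, diagonal_sub]
      rw [this, diagonal_conjTranspose, mul_diagonal, diagonal_mul]
      simp only [Pi.star_apply, star_sub, apply_ite star, star_one, star_zero]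
      ring
    rw [Matrix.smul_apply, Matrix.sum_apply]
    simp only [Matrix.sum_apply, hE, ← Finset.mul_sum]
    have hsc : ∑ k ∈ S, ∑ l ∈ S, (((if s x = k then (1:ℂ) else 0) - (if s x = l then 1 else 0)) *
          ((if s y = k then 1 else 0) - (if s y = l then 1 else 0)))
        = 2 * S.card * (if s x = s y then 1 else 0) - 2 := by
      simp only [sub_mul, mul_sub, Finset.sum_sub_distrib, Finset.sum_const, ← Finset.mul_sum,
        ← Finset.sum_mul, Finset.sum_ite_eq, hx, hy, if_true]
      have : ∑ k ∈ S, (if s x = k then (1:ℂ) else 0) * (if s y = k then 1 else 0)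
          = if s x = s y then 1 else 0 := by
        simp only [ite_mul, one_mul, zero_mul, Finset.sum_ite_eq, hx, if_true]
        simp only [eq_comm]
      simp only [nsmul_eq_mul, mul_assoc, ← Finset.mul_sum, this]
      ring
    rw [hsc, Matrix.sub_apply]
    by_cases hxy : x = y
    · subst hxy
      have him : ((M x x).re : ℂ) = M x x := by
        have := hM.1.apply x x
        exact Complex.conj_eq_iff_re.mp this
      rw [diagonal_apply_eq]
      push_cast
      rw [him]
      simp only [if_true, Complex.real_smul]
      push_cast
      ring
    · rw [diagonal_apply_ne _ hxy]
      by_cases hs : s x = s y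
      · simp [h0 x y hxy hs]
      · simp only [hs, if_false, Complex.real_smul]
        push_cast
        ring
  rw [key]
  refine PosSemidef.smul ?_ (by norm_num)
  refine posSemidef_sum _ fun k _ => posSemidef_sum _ fun l _ => hM.conjTranspose_mul_mul_same _

lemma gmean_conj (V : Matrix n n ℂ) (hV : Vᴴ * V = 1) (s a : n → ℝ) (hs : ∀ i, 0 < s i)
    (ha : ∀ i, 0 ≤ a i) (β : ℝ) :
    gmean β (V * diagonal (fun i => (s i : ℂ)) * Vᴴ) (V * diagonal (fun i => (a i : ℂ)) * Vᴴ)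
      = V * diagonal (fun i => ((s i ^ (1 - β) * a i ^ β : ℝ) : ℂ)) * Vᴴ := by
  have h1 : ∀ p q : n → ℝ, diagonal (fun i => (p i : ℂ)) * diagonal (fun i => (q i : ℂ))
      = diagonal (fun i => ((p i * q i : ℝ) : ℂ)) := by
    intro p q
    rw [diagonal_mul_diagonal]; simp
  rw [gmean, rpowH_conj V hV, rpowH_conj V hV, conj_mul V hV, conj_mul V hV, h1, h1,
    rpowH_conj V hV, conj_mul V hV, conj_mul V hV, h1, h1]
  congr 3
  ext i
  congr 1
  have hs' := hs i
  have : s i ^ (-(1/2) : ℝ) * a i * s i ^ (-(1/2) : ℝ) = s i ^ (-1 : ℝ) * a i := by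
    have : s i ^ (-1 : ℝ) = s i ^ (-(1/2) : ℝ) * s i ^ (-(1/2) : ℝ) := by
      rw [← Real.rpow_add hs']; norm_num
    rw [this]; ring
  rw [this, Real.mul_rpow (by positivity) (ha i), ← Real.rpow_mul hs'.le]
  have : s i ^ (1 - β) = s i ^ (1/2 : ℝ) * s i ^ (-1 * β) * s i ^ (1/2 : ℝ) := by
    rw [← Real.rpow_add hs', ← Real.rpow_add hs']; congr 1; ring
  rw [this]; ring

/-- Feasible point coming from the adapted basis. -/
lemma exists_feasible (α : ℝ) (hα : 1 < α)
    (ρ σ : Matrix n n ℂ) (hρ : ρ.PosSemidef) (hσ : σ.PosDef) :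
    ∃ v : n → n → ℂ, (∀ i j, star (v i) ⬝ᵥ v j = if i = j then 1 else 0) ∧
      ∃ A : Matrix n n ℂ, A.PosSemidef ∧ (gmean (1/α) σ A - ρ).PosSemidef ∧
        A.trace.re ≤ ((spectrum ℂ σ).ncard : ℝ) ^ α *
          ∑ x, ((star (v x) ⬝ᵥ ρ *ᵥ v x).re) ^ α * ((star (v x) ⬝ᵥ σ *ᵥ v x).re) ^ (1-α) := by
  obtain ⟨V, s, hV, hσV, hoff, hspec⟩ := exists_adapted ρ σ hρ.1 hσ.1
  have hV' : V * Vᴴ = 1 := mul_eq_one_comm.mp hV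
  set M := Vᴴ * ρ * V with hM
  have hMp : M.PosSemidef := hρ.conjTranspose_mul_mul_same V
  have hpin := pinching M hMp s hoff
  set K : ℝ := ((Finset.univ.image s).card : ℝ) with hK
  have hK0 : 0 ≤ K := by positivity
  have hv : ∀ i j, star (Vᵀ i) ⬝ᵥ Vᵀ j = if i = j then 1 else 0 := by
    intro i j
    have := quad_entry V 1 i j
    rw [Matrix.mul_one, hV, one_mulVec, Matrix.one_apply] at this
    exact this.symm
  have hqρ : ∀ x, (star (Vᵀ x) ⬝ᵥ ρ *ᵥ Vᵀ x).re = (M x x).re := fun x => by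
    rw [hM, quad_entry]
  have hqσ : ∀ x, (star (Vᵀ x) ⬝ᵥ σ *ᵥ Vᵀ x).re = s x := fun x => by
    rw [← quad_entry]
    have : Vᴴ * σ * V = diagonal (fun i => (s i : ℂ)) := by
      conv_lhs => rw [hσV]
      calc _ = (Vᴴ * V) * diagonal (fun i => (s i : ℂ)) * (Vᴴ * V) := by
            simp only [Matrix.mul_assoc]
        _ = _ := by rw [hV, Matrix.one_mul, Matrix.mul_one]
    rw [this, diagonal_apply_eq, Complex.ofReal_re]
  have hs : ∀ x, 0 < s x := fun x => by
    rw [← hqσ x]; exact quad_pos hσ _ (onb_ne_zero _ hv x)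
  have hm : ∀ x, 0 ≤ (M x x).re := fun x => by
    rw [← hqρ x]; exact quad_nonneg hρ _
  set a : n → ℝ := fun x => (K * (M x x).re) ^ α * s x ^ (1 - α) with ha
  have ha0 : ∀ x, 0 ≤ a x := fun x => by
    have := hs x
    have := hm x
    simp only [ha]; positivity
  have hα0 : α ≠ 0 := by linarith
  refine ⟨fun x => Vᵀ x, hv, V * diagonal (fun i => (a i : ℂ)) * Vᴴ, ?_, ?_, ?_⟩
  · refine PosSemidef.mul_mul_conjTranspose_same (PosSemidef.diagonal fun i => ?_) V
    exact Complex.zero_le_real.mpr (ha0 i)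
  · have e1 : gmean (1/α) σ (V * diagonal (fun i => (a i : ℂ)) * Vᴴ)
        = V * diagonal (fun i => ((K * (M i i).re : ℝ) : ℂ)) * Vᴴ := by
      conv_lhs => rw [hσV]
      rw [gmean_conj V hV s a hs ha0]
      congr 3
      ext i
      congr 1
      have := hs i
      have h2 := hm i
      simp only [ha]
      rw [Real.mul_rpow (by positivity) (by positivity), ← Real.rpow_mul (by positivity),
        mul_one_div_cancel hα0, Real.rpow_one, ← Real.rpow_mul this.le, mul_left_comm,
        ← Real.rpow_add this]
      have : 1 - 1/α + (1 - α) * (1/α) = 0 := by field_simp; ring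
      rw [this, Real.rpow_zero, mul_one]
    have e2 : ρ = V * M * Vᴴ := by
      calc ρ = (V * Vᴴ) * ρ * (V * Vᴴ) := by rw [hV', Matrix.one_mul, Matrix.mul_one]
        _ = _ := by rw [hM]; simp only [Matrix.mul_assoc]
    have e3 : gmean (1/α) σ (V * diagonal (fun i => (a i : ℂ)) * Vᴴ) - ρ
        = V * (diagonal (fun i => ((K * (M i i).re : ℝ) : ℂ)) - M) * Vᴴ := by
      rw [e1, Matrix.mul_sub, Matrix.sub_mul, ← e2]
    rw [e3]
    exact hpin.mul_mul_conjTranspose_same V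
  · have hKN : K ≤ ((spectrum ℂ σ).ncard : ℝ) := by
      have hfin : (spectrum ℂ σ).Finite := by
        rw [hσ.1.spectrum_eq_image_range]
        exact (Set.finite_range _).image _
      have hinj : ((Finset.univ.image s).image (fun t : ℝ => (t : ℂ))).card
          = (Finset.univ.image s).card :=
        Finset.card_image_of_injective _ Complex.ofReal_injective
      have hsub : (((Finset.univ.image s).image (fun t : ℝ => (t : ℂ)) : Finset ℂ) : Set ℂ)
          ⊆ spectrum ℂ σ := by
        intro z hz
        simp only [Finset.coe_image, Finset.coe_univ, Set.image_univ, Set.mem_image,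
          Set.mem_range] at hz
        obtain ⟨_, ⟨i, rfl⟩, rfl⟩ := hz
        exact hspec i
      have hcard := Set.ncard_le_ncard hsub hfin
      rw [Set.ncard_coe_finset, hinj] at hcard
      rw [hK]
      exact_mod_cast hcard
    rw [Matrix.trace_mul_comm, ← Matrix.mul_assoc, hV, Matrix.one_mul, trace_diagonal,
      Complex.re_sum, Finset.mul_sum]
    refine Finset.sum_le_sum fun x _ => ?_
    rw [hqρ, hqσ, Complex.ofReal_re]
    have := hs x
    have h2 := hm x
    simp only [ha]
    rw [Real.mul_rpow hK0 h2, mul_assoc]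
    gcongr

end DAux

/-- D^M_α ≤ D^#_α ≤ D^M_α + (α/(α−1))·log₂|spec(σ)|. -/
theorem DMeas_le_DSharp_le
    {n : Type*} [Fintype n] [DecidableEq n]
    (α : ℝ) (hα : 1 < α)
    (ρ σ : Matrix n n ℂ) (hρ : ρ.PosSemidef) (hρ0 : ρ ≠ 0) (hσ : σ.PosDef) :
    DMeas α ρ σ ≤ DSharp α ρ σ ∧
    DSharp α ρ σ ≤ DMeas α ρ σ
      + α/(α-1) * Real.logb 2 ((spectrum ℂ σ).ncard : ℝ) := by
  have hα1 : 0 < 1/(α-1) := by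
    have : 0 < α - 1 := by linarith
    positivity
  obtain ⟨v, hv, A, hA, hle, htr⟩ := DAux.exists_feasible α hα ρ σ hρ hσ
  -- every orthonormal basis gives a lower bound of `QSharp`
  have hlow : ∀ u : n → n → ℂ, (∀ i j, star (u i) ⬝ᵥ u j = if i = j then 1 else 0) →
      (∑ x, ((star (u x) ⬝ᵥ ρ *ᵥ u x).re) ^ α * ((star (u x) ⬝ᵥ σ *ᵥ u x).re) ^ (1-α))
        ≤ QSharp α ρ σ := by
    intro u hu
    refine le_csInf ⟨_, A, hA, hle, rfl⟩ ?_
    rintro t ⟨B, hB, hBle, rfl⟩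
    exact DAux.sum_le_trace α hα ρ σ hρ hσ u hu B hB hBle
  have hub : ∀ u : n → n → ℂ, (∀ i j, star (u i) ⬝ᵥ u j = if i = j then 1 else 0) →
      1/(α-1) * Real.logb 2
      (∑ x, ((star (u x) ⬝ᵥ ρ *ᵥ u x).re) ^ α * ((star (u x) ⬝ᵥ σ *ᵥ u x).re) ^ (1-α))
        ≤ DSharp α ρ σ := by
    intro u hu
    rw [DSharp]
    refine mul_le_mul_of_nonneg_left ?_ hα1.le
    exact Real.logb_le_logb_of_le (by norm_num) (DAux.sum_pos α ρ σ hρ hρ0 hσ u hu) (hlow u hu)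
  constructor
  · refine csSup_le ⟨_, v, hv, rfl⟩ ?_
    rintro t ⟨u, hu, rfl⟩
    exact hub u hu
  · have hpos := DAux.sum_pos α ρ σ hρ hρ0 hσ v hv
    have hQ0 := lt_of_lt_of_le hpos (hlow v hv)
    have hQA : QSharp α ρ σ ≤ A.trace.re := by
      refine csInf_le ⟨0, ?_⟩ ⟨A, hA, hle, rfl⟩
      rintro t ⟨B, hB, -, rfl⟩
      exact (Complex.le_def.mp hB.trace_nonneg).1
    have hM : 1/(α-1) * Real.logb 2
        (∑ x, ((star (v x) ⬝ᵥ ρ *ᵥ v x).re) ^ α * ((star (v x) ⬝ᵥ σ *ᵥ v x).re) ^ (1-α))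
        ≤ DMeas α ρ σ := by
      refine le_csSup ⟨DSharp α ρ σ, ?_⟩ ⟨v, hv, rfl⟩
      rintro t ⟨u, hu, rfl⟩
      exact hub u hu
    have hQ := hQA.trans htr
    generalize (∑ x, ((star (v x) ⬝ᵥ ρ *ᵥ v x).re) ^ α *
      ((star (v x) ⬝ᵥ σ *ᵥ v x).re) ^ (1-α)) = F at *
    have hN : (0:ℝ) < ((spectrum ℂ σ).ncard : ℝ) := by
      rcases Nat.eq_zero_or_pos (spectrum ℂ σ).ncard with h | h
      · rw [h, Nat.cast_zero, Real.zero_rpow (by linarith), zero_mul] at hQ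
        linarith
      · exact_mod_cast h
    have hlog := Real.logb_le_logb_of_le (b := 2) (by norm_num) hQ0 hQ
    rw [Real.logb_mul (Real.rpow_pos_of_pos hN _).ne' hpos.ne',
      Real.logb_rpow_eq_mul_logb_of_pos hN] at hlog
    have h5 := mul_le_mul_of_nonneg_left hlog hα1.le
    rw [DSharp]
    calc _ ≤ _ := h5
      _ = 1/(α-1) * Real.logb 2 F + α/(α-1) * Real.logb 2 ((spectrum ℂ σ).ncard : ℝ) := by ring
      _ ≤ _ := by linarith
end

section
/- Let α ∈ (1,∞), let ρ be a nonzero positive semidefinite complex matrix and σ a positive definite complex matrix of the same size. Then the sequence n ↦ (1/n) · D^#_α(ρ^{⊗n} ‖ σ^{⊗n}) converges as n → ∞ to the sandwiched Rényi divergence 𝐷̃_α(ρ‖σ). -/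
open Matrix Filter
open scoped Kronecker Classical ComplexOrder

/-- The n-th Kronecker (tensor) power of a matrix, indexed by Fin n → ι. -/
noncomputable def tpow {ι : Type*} (ρ : Matrix ι ι ℂ) (n : ℕ) :
    Matrix (Fin n → ι) (Fin n → ι) ℂ :=
  Matrix.of fun f g => ∏ k, ρ (f k) (g k)


namespace RegDiv

section basic
variable {m n : Type*} [Fintype m] [DecidableEq m] [Fintype n] [DecidableEq n]

lemma spec {A : Matrix n n ℂ} (hA : A.IsHermitian) :
    ∃ U : Matrix n n ℂ, Uᴴ * U = 1 ∧ U * Uᴴ = 1 ∧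
      A = U * diagonal (fun i => ((hA.eigenvalues i : ℝ) : ℂ)) * Uᴴ ∧
      ∀ r : ℝ, A.rpowH r = U * diagonal (fun i => ((hA.eigenvalues i ^ r : ℝ) : ℂ)) * Uᴴ := by
  refine ⟨(hA.eigenvectorUnitary : Matrix n n ℂ), ?_, ?_, ?_, ?_⟩
  · exact Unitary.coe_star_mul_self hA.eigenvectorUnitary
  · exact Unitary.coe_mul_star_self hA.eigenvectorUnitary
  · exact hA.spectral_theorem
  · intro r
    rw [Matrix.rpowH, dif_pos hA]
    rfl

lemma rpowH_diag_intertwine {A : Matrix n n ℂ} (hA : A.IsHermitian) (M : Matrix n m ℂ)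
    (d : m → ℝ) (h : A * M = M * diagonal (fun i => (d i : ℂ))) (r : ℝ) :
    A.rpowH r * M = M * diagonal (fun i => ((d i ^ r : ℝ) : ℂ)) := by
  obtain ⟨U, h1, h2, h3, h4⟩ := spec hA
  rw [h4]
  have key : diagonal (fun i => ((hA.eigenvalues i : ℝ) : ℂ)) * (Uᴴ * M)
      = (Uᴴ * M) * diagonal (fun i => (d i : ℂ)) := by
    have : Uᴴ * (A * M) = Uᴴ * (M * diagonal (fun i => (d i : ℂ))) := by rw [h]
    rw [Matrix.mul_assoc, ← this]
    conv_rhs => rw [h3]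
    simp only [← Matrix.mul_assoc, h1, Matrix.one_mul]
  have key2 : diagonal (fun i => ((hA.eigenvalues i ^ r : ℝ) : ℂ)) * (Uᴴ * M)
      = (Uᴴ * M) * diagonal (fun i => ((d i ^ r : ℝ) : ℂ)) := by
    ext i j
    have := congrFun (congrFun key i) j
    rw [diagonal_mul, mul_diagonal] at this ⊢
    by_cases hz : (Uᴴ * M) i j = 0
    · simp [hz]
    · rw [mul_comm] at this
      have := mul_left_cancel₀ hz this
      have : hA.eigenvalues i = d j := by exact_mod_cast this
      rw [this, mul_comm]
  rw [Matrix.mul_assoc, Matrix.mul_assoc, key2, ← Matrix.mul_assoc, ← Matrix.mul_assoc, h2,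
    Matrix.one_mul]

lemma rpowH_intertwine {A : Matrix n n ℂ} (hA : A.IsHermitian) {K : Matrix m m ℂ}
    (hK : K.IsHermitian) (M : Matrix n m ℂ) (h : A * M = M * K) (r : ℝ) :
    A.rpowH r * M = M * K.rpowH r := by
  obtain ⟨U, h1, h2, h3, h4⟩ := spec hK
  have := rpowH_diag_intertwine hA (M * U) hK.eigenvalues (by
    rw [← Matrix.mul_assoc, h, Matrix.mul_assoc, Matrix.mul_assoc]
    congr 1
    generalize hK.eigenvalues = k at h3
    rw [h3]
    simp only [Matrix.mul_assoc, h1, Matrix.mul_one]) r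
  rw [h4, ← Matrix.mul_assoc, ← Matrix.mul_assoc, ← this]
  simp only [Matrix.mul_assoc, h2, Matrix.mul_one]

/-- The power of a matrix given by any diagonalization. -/
lemma rpowH_of_diag (U : Matrix n n ℂ) (h2 : U * Uᴴ = 1) (d : n → ℝ) (r : ℝ) :
    (U * diagonal (fun i => (d i : ℂ)) * Uᴴ).rpowH r
      = U * diagonal (fun i => ((d i ^ r : ℝ) : ℂ)) * Uᴴ := by
  have h1 : Uᴴ * U = 1 := mul_eq_one_comm.1 h2
  have hA : (U * diagonal (fun i => (d i : ℂ)) * Uᴴ).IsHermitian := by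
    apply isHermitian_mul_mul_conjTranspose
    rw [Matrix.IsHermitian, diagonal_conjTranspose]
    congr 1; ext i; simp
  rw [← rpowH_diag_intertwine hA U d (by simp only [Matrix.mul_assoc, h1, Matrix.mul_one])]
  simp only [Matrix.mul_assoc, h2, Matrix.mul_one]

lemma diag_psd {n : Type*} [DecidableEq n] {d : n → ℝ} (hd : ∀ i, 0 ≤ d i) :
    (diagonal (fun i => (d i : ℂ))).PosSemidef :=
  PosSemidef.diagonal (fun i => by simpa using hd i)

lemma rpowH_psd {A : Matrix n n ℂ} (hA : A.PosSemidef) (r : ℝ) : (A.rpowH r).PosSemidef := by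
  obtain ⟨U, h1, h2, h3, h4⟩ := spec hA.1
  rw [h4]
  exact (diag_psd fun i => Real.rpow_nonneg (hA.eigenvalues_nonneg i) r).mul_mul_conjTranspose_same U

lemma rpowH_herm {A : Matrix n n ℂ} (hA : A.PosSemidef) (r : ℝ) : (A.rpowH r)ᴴ = A.rpowH r :=
  (rpowH_psd hA r).1

lemma rpowH_one {A : Matrix n n ℂ} (hA : A.IsHermitian) : A.rpowH 1 = A := by
  obtain ⟨U, h1, h2, h3, h4⟩ := spec hA
  rw [h4]
  conv_rhs => rw [h3]
  simp

lemma rpowH_rpowH {A : Matrix n n ℂ} (hA : A.PosSemidef) (r s : ℝ) :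
    (A.rpowH r).rpowH s = A.rpowH (r * s) := by
  obtain ⟨U, h1, h2, h3, h4⟩ := spec hA.1
  rw [h4, h4, rpowH_of_diag U h2]
  simp only [Real.rpow_mul (hA.eigenvalues_nonneg _)]

lemma rpowH_add {A : Matrix n n ℂ} (hA : A.PosDef) (r s : ℝ) :
    A.rpowH r * A.rpowH s = A.rpowH (r + s) := by
  obtain ⟨U, h1, h2, h3, h4⟩ := spec hA.1
  rw [h4, h4, h4]
  simp only [Real.rpow_add (hA.eigenvalues_pos _)]
  have : U * diagonal (fun i => ((hA.1.eigenvalues i ^ r : ℝ) : ℂ)) * Uᴴ *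
      (U * diagonal (fun i => ((hA.1.eigenvalues i ^ s : ℝ) : ℂ)) * Uᴴ)
      = U * (diagonal (fun i => ((hA.1.eigenvalues i ^ r : ℝ) : ℂ)) * (Uᴴ * U) *
      diagonal (fun i => ((hA.1.eigenvalues i ^ s : ℝ) : ℂ))) * Uᴴ := by
    simp only [Matrix.mul_assoc]
  rw [this, h1, Matrix.mul_one, diagonal_mul_diagonal]
  simp

lemma rpowH_zero {A : Matrix n n ℂ} (hA : A.IsHermitian) : A.rpowH 0 = 1 := by
  obtain ⟨U, h1, h2, h3, h4⟩ := spec hA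
  rw [h4]
  simp [h2]

lemma rpowH_smul {A : Matrix n n ℂ} (hA : A.PosSemidef) {c : ℝ} (hc : 0 ≤ c) (r : ℝ) :
    ((c : ℂ) • A).rpowH r = ((c ^ r : ℝ) : ℂ) • A.rpowH r := by
  obtain ⟨U, h1, h2, h3, h4⟩ := spec hA.1
  have e (c : ℝ) (d : n → ℝ) : (c : ℂ) • (U * diagonal (fun i => (d i : ℂ)) * Uᴴ)
      = U * diagonal (fun i => ((c * d i : ℝ) : ℂ)) * Uᴴ := by
    rw [← Matrix.smul_mul, ← Matrix.mul_smul, ← diagonal_smul]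
    congr 3; ext i; simp
  rw [h4, e]
  conv_lhs => rw [h3]
  rw [e, rpowH_of_diag U h2]
  simp only [Real.mul_rpow hc (hA.eigenvalues_nonneg _)]

lemma trace_rpowH {A : Matrix n n ℂ} (hA : A.IsHermitian) (r : ℝ) :
    (A.rpowH r).trace.re = ∑ i, hA.eigenvalues i ^ r := by
  obtain ⟨U, h1, h2, h3, h4⟩ := spec hA
  rw [h4, Matrix.trace_mul_cycle, h1, Matrix.one_mul, trace_diagonal, ← Complex.ofReal_sum,
    Complex.ofReal_re]

lemma trace_rpowH_pos {A : Matrix n n ℂ} (hA : A.PosSemidef) (h0 : A ≠ 0) (r : ℝ) :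
    0 < (A.rpowH r).trace.re := by
  rw [trace_rpowH hA.1]
  have hne : ∃ i, hA.1.eigenvalues i ≠ 0 := by
    by_contra! hcon
    exact h0 (hA.1.eigenvalues_eq_zero_iff.1 (funext hcon))
  obtain ⟨i, hi⟩ := hne
  exact Finset.sum_pos' (fun j _ => Real.rpow_nonneg (hA.eigenvalues_nonneg j) r)
    ⟨i, Finset.mem_univ _,
      Real.rpow_pos_of_pos (lt_of_le_of_ne (hA.eigenvalues_nonneg i) (Ne.symm hi)) r⟩

lemma rpowH_mono {A B : Matrix n n ℂ} (hA : A.PosSemidef) (hAB : (B - A).PosSemidef)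
    {p : ℝ} (hp : p ∈ Set.Icc (0 : ℝ) 1) : (B.rpowH p - A.rpowH p).PosSemidef := by
  open scoped Matrix.Norms.L2Operator MatrixOrder in
  have hB : B.PosSemidef := by simpa using hAB.add hA
  have e : ∀ C : Matrix n n ℂ, C.PosSemidef → C.rpowH p = CFC.rpow C p := by
    intro C hC
    have h0 : (0 : Matrix n n ℂ) ≤ C := by rw [Matrix.le_iff]; simpa using hC
    have := CFC.rpow_eq_cfc_real (a := C) (y := p) h0
    rw [Matrix.rpowH, dif_pos hC.1]
    change _ = C ^ p
    rw [this, hC.1.cfc_eq]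
    rfl
  have h1 : A ≤ B := by rwa [Matrix.le_iff]
  have h2 := CFC.rpow_le_rpow hp h1
  rw [Matrix.le_iff] at h2
  rw [e A hA, e B hB]
  exact h2

set_option maxHeartbeats 1000000 in
/-- Peierls–Jensen trace inequality. -/
lemma trace_rpowH_le {T : Type*} [Fintype T] {Y Z : Matrix n n ℂ} (hY : Y.PosSemidef)
    (hZ : Z.PosSemidef) (K : T → Matrix n n ℂ) (hK1 : ∑ t, K t * (K t)ᴴ = 1)
    (hK2 : ∑ t, (K t)ᴴ * K t = 1) (hle : (∑ t, K t * Z * (K t)ᴴ - Y).PosSemidef)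
    {a : ℝ} (ha : 1 ≤ a) :
    (Y.rpowH a).trace.re ≤ (Z.rpowH a).trace.re := by
  rw [trace_rpowH hY.1, trace_rpowH hZ.1]
  obtain ⟨U, u1, u2, u3, -⟩ := spec hY.1
  obtain ⟨V, v1, v2, v3, -⟩ := spec hZ.1
  have hy0 : ∀ i, 0 ≤ hY.1.eigenvalues i := hY.eigenvalues_nonneg
  have hz0 : ∀ i, 0 ≤ hZ.1.eigenvalues i := hZ.eigenvalues_nonneg
  generalize hY.1.eigenvalues = y at *
  generalize hZ.1.eigenvalues = z at *
  let M : T → Matrix n n ℂ := fun t => Uᴴ * K t * V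
  let w : n → n → ℝ := fun i j => ∑ t, Complex.normSq (M t i j)
  have hw0 : ∀ i j, 0 ≤ w i j := fun i j => Finset.sum_nonneg fun t _ => Complex.normSq_nonneg _
  have rows : ∑ t, M t * (M t)ᴴ = 1 := by
    have : ∀ t, M t * (M t)ᴴ = Uᴴ * (K t * (K t)ᴴ) * U := by
      intro t
      simp only [M, conjTranspose_mul, conjTranspose_conjTranspose]
      calc Uᴴ * K t * V * (Vᴴ * ((K t)ᴴ * U)) = Uᴴ * K t * (V * Vᴴ) * ((K t)ᴴ * U) := by
            simp only [Matrix.mul_assoc]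
        _ = _ := by rw [v2, Matrix.mul_one]; simp only [Matrix.mul_assoc]
    simp only [this]
    rw [← Matrix.sum_mul, ← Matrix.mul_sum, hK1, Matrix.mul_one, u1]
  have cols : ∑ t, (M t)ᴴ * M t = 1 := by
    have : ∀ t, (M t)ᴴ * M t = Vᴴ * ((K t)ᴴ * K t) * V := by
      intro t
      simp only [M, conjTranspose_mul, conjTranspose_conjTranspose]
      calc Vᴴ * ((K t)ᴴ * U) * (Uᴴ * K t * V) = Vᴴ * (K t)ᴴ * (U * Uᴴ) * (K t * V) := by
            simp only [Matrix.mul_assoc]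
        _ = _ := by rw [u2, Matrix.mul_one]; simp only [Matrix.mul_assoc]
    simp only [this]
    rw [← Matrix.sum_mul, ← Matrix.mul_sum, hK2, Matrix.mul_one, v1]
  have hrow : ∀ i, ∑ j, w i j = 1 := by
    intro i
    have := congrFun (congrFun rows i) i
    simp only [Matrix.sum_apply, Matrix.mul_apply, conjTranspose_apply, Matrix.one_apply_eq,
      Complex.star_def, Complex.mul_conj] at this
    rw [Finset.sum_comm] at this
    exact_mod_cast this
  have hcol : ∀ j, ∑ i, w i j = 1 := by
    intro j
    have := congrFun (congrFun cols j) j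
    simp only [Matrix.sum_apply, Matrix.mul_apply, conjTranspose_apply, Matrix.one_apply_eq,
      Complex.star_def, ← Complex.normSq_eq_conj_mul_self] at this
    rw [Finset.sum_comm] at this
    exact_mod_cast this
  have hyz : ∀ i, y i ≤ ∑ j, w i j * z j := by
    intro i
    have h1 := (hle.conjTranspose_mul_mul_same U).diag_nonneg (i := i)
    have h2 : Uᴴ * (∑ t, K t * Z * (K t)ᴴ - Y) * U
        = ∑ t, M t * diagonal (fun i => (z i : ℂ)) * (M t)ᴴ - diagonal (fun i => (y i : ℂ)) := by
      rw [Matrix.mul_sub, Matrix.sub_mul, Matrix.mul_sum, Matrix.sum_mul]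
      congr 1
      · refine Finset.sum_congr rfl fun t _ => ?_
        conv_lhs => rw [v3]
        simp only [M, conjTranspose_mul, conjTranspose_conjTranspose, Matrix.mul_assoc]
      · conv_lhs => rw [u3]
        calc _ = (Uᴴ * U) * diagonal (fun i => (y i : ℂ)) * (Uᴴ * U) := by
              simp only [Matrix.mul_assoc]
          _ = _ := by rw [u1, Matrix.one_mul, Matrix.mul_one]
    rw [h2, Matrix.sub_apply, diagonal_apply_eq, Matrix.sum_apply] at h1
    have h3 : ∑ t, (M t * diagonal (fun i => (z i : ℂ)) * (M t)ᴴ) i i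
        = ((∑ j, w i j * z j : ℝ) : ℂ) := by
      simp only [w, Finset.sum_mul]
      rw [Finset.sum_comm]
      push_cast
      refine Finset.sum_congr rfl fun t _ => ?_
      rw [Matrix.mul_apply]
      refine Finset.sum_congr rfl fun j _ => ?_
      rw [mul_diagonal, conjTranspose_apply, Complex.normSq_eq_conj_mul_self, Complex.star_def]
      ring
    rw [h3, ← Complex.ofReal_sub, Complex.zero_le_real] at h1
    linarith
  calc ∑ i, y i ^ a ≤ ∑ i, ∑ j, w i j * z j ^ a := by
        refine Finset.sum_le_sum fun i _ => ?_
        calc y i ^ a ≤ (∑ j, w i j * z j) ^ a :=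
              Real.rpow_le_rpow (hy0 i) (hyz i) (by linarith)
          _ ≤ _ := Real.rpow_arith_mean_le_arith_mean_rpow _ _ _ (fun j _ => hw0 i j) (hrow i)
              (fun j _ => hz0 j) ha
    _ = ∑ j, z j ^ a := by
        rw [Finset.sum_comm]
        simp only [← Finset.sum_mul, hcol, one_mul]

lemma trace_rpowH_mono {Y Z : Matrix n n ℂ} (hY : Y.PosSemidef)
    (hZ : Z.PosSemidef) (hle : (Z - Y).PosSemidef) {a : ℝ} (ha : 1 ≤ a) :
    (Y.rpowH a).trace.re ≤ (Z.rpowH a).trace.re :=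
  trace_rpowH_le hY hZ (fun _ : Unit => (1 : Matrix n n ℂ)) (by simp) (by simp) (by simpa using hle) ha

end basic

section oneshot
variable {n : Type*} [Fintype n] [DecidableEq n] {T : Type*} [Fintype T]

/-- A resolution of the identity by orthogonal projections adapted to `σ`. -/
structure PinchData (σ : Matrix n n ℂ) (T : Type*) [Fintype T] where
  p : T → Matrix n n ℂ
  s : T → ℝ
  herm : ∀ t, (p t)ᴴ = p t
  idem : ∀ t, p t * p t = p t
  orth : ∀ t u, t ≠ u → p t * p u = 0
  sum : ∑ t, p t = 1
  pos : ∀ t, 0 < s t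
  eig : ∀ t, σ * p t = (s t : ℂ) • p t

variable {σ : Matrix n n ℂ} (D : PinchData σ T)

/-- The pinching map. -/
noncomputable def PinchData.pinch (A : Matrix n n ℂ) : Matrix n n ℂ := ∑ t, D.p t * A * D.p t

lemma pinch_psd {A : Matrix n n ℂ} (hA : A.PosSemidef) : (D.pinch A).PosSemidef := by
  refine posSemidef_sum _ fun t _ => ?_
  have := hA.mul_mul_conjTranspose_same (D.p t)
  rwa [D.herm] at this

lemma pinch_smul (c : ℂ) (A : Matrix n n ℂ) : D.pinch (c • A) = c • D.pinch A := by
  simp [PinchData.pinch, Finset.smul_sum]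

lemma pinch_mul_p (A : Matrix n n ℂ) (t : T) : D.pinch A * D.p t = D.p t * A * D.p t := by
  rw [PinchData.pinch, Matrix.sum_mul, Finset.sum_eq_single t]
  · rw [Matrix.mul_assoc, D.idem]
  · intro u _ hu
    rw [Matrix.mul_assoc, D.orth u t hu, Matrix.mul_zero]
  · simp

lemma p_mul_pinch (A : Matrix n n ℂ) (t : T) : D.p t * D.pinch A = D.p t * A * D.p t := by
  rw [PinchData.pinch, Matrix.mul_sum, Finset.sum_eq_single t]
  · rw [← Matrix.mul_assoc, ← Matrix.mul_assoc, D.idem]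
  · intro u _ hu
    rw [← Matrix.mul_assoc, ← Matrix.mul_assoc, D.orth t u hu.symm]; simp
  · simp

lemma pinch_trace (A : Matrix n n ℂ) : (D.pinch A).trace = A.trace := by
  rw [PinchData.pinch, Matrix.trace_sum]
  have : ∀ t, (D.p t * A * D.p t).trace = (D.p t * A).trace := by
    intro t
    rw [Matrix.trace_mul_cycle, D.idem]
  simp only [this]
  rw [← Matrix.trace_sum, ← Matrix.sum_mul, D.sum, Matrix.one_mul]

/-- The pinching inequality. -/
lemma pinch_ineq {A : Matrix n n ℂ} (hA : A.PosSemidef) :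
    ((((Fintype.card T : ℝ) : ℂ) • D.pinch A) - A).PosSemidef := by
  have key : (((Fintype.card T : ℝ) : ℂ) • D.pinch A) - A
      = ((1 / 2 : ℝ) : ℂ) • ∑ t, ∑ u, (D.p t - D.p u) * A * (D.p t - D.p u)ᴴ := by
    have e : ∀ t u, (D.p t - D.p u) * A * (D.p t - D.p u)ᴴ
        = D.p t * A * D.p t + D.p u * A * D.p u - D.p t * A * D.p u - D.p u * A * D.p t := by
      intro t u
      rw [conjTranspose_sub, D.herm, D.herm]
      noncomm_ring
    have h1 : ∑ t, ∑ u, D.p t * A * D.p u = A := by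
      simp only [← Matrix.mul_sum, D.sum, Matrix.mul_one]
      rw [← Matrix.sum_mul, D.sum, Matrix.one_mul]
    have h2 : ∑ t, ∑ u, D.p u * A * D.p t = A := by
      rw [Finset.sum_comm]; exact h1
    have h3 : ∑ t : T, ∑ _u : T, D.p t * A * D.p t = ((Fintype.card T : ℝ) : ℂ) • D.pinch A := by
      simp only [Finset.sum_const, Finset.card_univ, PinchData.pinch]
      rw [← Finset.smul_sum, ← Nat.cast_smul_eq_nsmul ℂ]
      simp
    have h4 : ∑ _t : T, ∑ u : T, D.p u * A * D.p u = ((Fintype.card T : ℝ) : ℂ) • D.pinch A := by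
      rw [Finset.sum_comm]; exact h3
    simp only [e, Finset.sum_sub_distrib, Finset.sum_add_distrib]
    rw [h1, h2, h3, h4]
    push_cast
    module
  rw [key]
  refine PosSemidef.smul ?_ (by rw [Complex.zero_le_real]; norm_num)
  exact posSemidef_sum _ fun t _ => posSemidef_sum _ fun u _ => hA.mul_mul_conjTranspose_same _


lemma rpow_p (hσ : σ.PosDef) (r : ℝ) (t : T) : σ.rpowH r * D.p t = ((D.s t ^ r : ℝ) : ℂ) • D.p t := by
  have := rpowH_diag_intertwine hσ.1 (D.p t) (fun _ => D.s t) (by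
    rw [D.eig]; ext i j; rw [mul_diagonal]; simp [mul_comm]) r
  rw [this]; ext i j; rw [mul_diagonal]; simp [mul_comm]

lemma p_rpow (hσ : σ.PosDef) (r : ℝ) (t : T) : D.p t * σ.rpowH r = ((D.s t ^ r : ℝ) : ℂ) • D.p t := by
  have := congrArg conjTranspose (rpow_p D hσ r t)
  rw [conjTranspose_mul, conjTranspose_smul, D.herm, rpowH_herm hσ.posSemidef] at this
  simpa using this

lemma pinch_conj (hσ : σ.PosDef) (r : ℝ) (A : Matrix n n ℂ) :
    D.pinch (σ.rpowH r * A * σ.rpowH r) = σ.rpowH r * D.pinch A * σ.rpowH r := by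
  rw [PinchData.pinch, PinchData.pinch, Matrix.mul_sum, Matrix.sum_mul]
  refine Finset.sum_congr rfl fun t _ => ?_
  have c : D.p t * σ.rpowH r = σ.rpowH r * D.p t := by rw [p_rpow D hσ, rpow_p D hσ]
  calc _ = (D.p t * σ.rpowH r) * A * (σ.rpowH r * D.p t) := by simp only [Matrix.mul_assoc]
    _ = (σ.rpowH r * D.p t) * A * (D.p t * σ.rpowH r) := by rw [c]
    _ = _ := by simp only [Matrix.mul_assoc]

lemma rpowH_sandwich (hσ : σ.PosDef) {B : Matrix n n ℂ} (hB : B.PosSemidef)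
    (hcomm : ∀ t, B * D.p t = D.p t * B) (q b : ℝ) :
    (σ.rpowH q * B * σ.rpowH q).rpowH b = σ.rpowH (q * b) * B.rpowH b * σ.rpowH (q * b) := by
  have hC : (σ.rpowH q * B * σ.rpowH q).PosSemidef := by
    have := hB.mul_mul_conjTranspose_same (σ.rpowH q)
    rwa [rpowH_herm hσ.posSemidef] at this
  have gen : ∀ (q : ℝ) (B : Matrix n n ℂ) (t : T), B * D.p t = D.p t * B →
      σ.rpowH q * B * σ.rpowH q * D.p t = D.p t * (((D.s t ^ q * D.s t ^ q : ℝ) : ℂ) • B) := by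
    intro q B t h
    rw [Matrix.mul_assoc, rpow_p D hσ, Matrix.mul_smul, Matrix.mul_assoc, h, ← Matrix.mul_assoc,
      rpow_p D hσ, Matrix.smul_mul, smul_smul, Matrix.mul_smul, Complex.ofReal_mul]
  have key : ∀ t, (σ.rpowH q * B * σ.rpowH q).rpowH b * D.p t
      = σ.rpowH (q * b) * B.rpowH b * σ.rpowH (q * b) * D.p t := by
    intro t
    have hs := (D.pos t).le
    have hs0 : 0 ≤ D.s t ^ q * D.s t ^ q := mul_nonneg (Real.rpow_nonneg hs _) (Real.rpow_nonneg hs _)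
    rw [gen _ _ _ (rpowH_intertwine hB.1 hB.1 (D.p t) (hcomm t) b),
      rpowH_intertwine hC.1 (PosSemidef.smul hB (by rwa [Complex.zero_le_real])).1 (D.p t)
        (gen q B t (hcomm t)) b, rpowH_smul hB hs0, Real.rpow_mul hs,
      Real.mul_rpow (Real.rpow_nonneg hs _) (Real.rpow_nonneg hs _)]
  have h := Finset.sum_congr (rfl : (Finset.univ : Finset T) = _) fun t _ => key t
  rwa [← Matrix.mul_sum, ← Matrix.mul_sum, D.sum, Matrix.mul_one, Matrix.mul_one] at h

lemma conj_psd (hσ : σ.PosDef) {B : Matrix n n ℂ} (hB : B.PosSemidef) (q : ℝ) :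
    (σ.rpowH q * B * σ.rpowH q).PosSemidef := by
  have := hB.mul_mul_conjTranspose_same (σ.rpowH q)
  rwa [rpowH_herm hσ.posSemidef] at this

lemma conj_conj (hσ : σ.PosDef) (B : Matrix n n ℂ) (q r : ℝ) :
    σ.rpowH q * (σ.rpowH r * B * σ.rpowH r) * σ.rpowH q
      = σ.rpowH (q + r) * B * σ.rpowH (q + r) := by
  have e : σ.rpowH (q + r) = σ.rpowH r * σ.rpowH q := by rw [rpowH_add hσ, add_comm]
  rw [← rpowH_add hσ q r]
  calc _ = σ.rpowH q * σ.rpowH r * B * (σ.rpowH r * σ.rpowH q) := by simp only [Matrix.mul_assoc]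
    _ = _ := by rw [← e, rpowH_add hσ]

lemma conj_zero (hσ : σ.PosDef) (B : Matrix n n ℂ) : σ.rpowH 0 * B * σ.rpowH 0 = B := by
  rw [rpowH_zero hσ.1, Matrix.one_mul, Matrix.mul_one]

/-- one-shot lower bound -/
lemma lower (D : PinchData σ T) (hσ : σ.PosDef) {α : ℝ} (hα : 1 < α) {ρ A : Matrix n n ℂ} (hρ : ρ.PosSemidef) (hA : A.PosSemidef)
    (hle : (Matrix.gmean (1/α) σ A - ρ).PosSemidef) :
    ((σ.rpowH ((1-α)/(2*α)) * ρ * σ.rpowH ((1-α)/(2*α))).rpowH α).trace.re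
      ≤ (Fintype.card T : ℝ) * A.trace.re := by
  have hα0 : α ≠ 0 := by positivity
  set c : ℝ := (Fintype.card T : ℝ) with hc
  have hc0 : 0 ≤ c := by positivity
  have hcC : (0 : ℂ) ≤ (c : ℂ) := by rwa [Complex.zero_le_real]
  set q : ℝ := (1-α)/(2*α) with hq
  have hq1 : q + 1/2 = 1/2 * (1/α) := by rw [hq]; field_simp; ring
  set X := σ.rpowH (-(1/2)) * A * σ.rpowH (-(1/2)) with hX
  have hXp : X.PosSemidef := conj_psd hσ hA _
  have hcP : ((c : ℂ) • D.pinch X).PosSemidef := PosSemidef.smul (pinch_psd D hXp) hcC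
  have h1 := rpowH_mono hXp (pinch_ineq D hXp) (p := 1/α)
    ⟨by positivity, by rw [div_le_one (by linarith)]; exact hα.le⟩
  have h2 : (σ.rpowH (1/2 * (1/α)) * X.rpowH (1/α) * σ.rpowH (1/2 * (1/α))
      - σ.rpowH q * ρ * σ.rpowH q).PosSemidef := by
    have := conj_psd hσ hle q
    rw [Matrix.mul_sub, Matrix.sub_mul, Matrix.gmean, conj_conj hσ, hq1] at this
    exact this
  have h3 := conj_psd hσ h1 (1/2 * (1/α))
  rw [Matrix.mul_sub, Matrix.sub_mul, ← hc] at h3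
  have h4 := h3.add h2
  rw [sub_add_sub_cancel, ← rpowH_sandwich D hσ hcP (fun t => by
    rw [Matrix.smul_mul, Matrix.mul_smul, pinch_mul_p, p_mul_pinch])] at h4
  have h5 : σ.rpowH (1/2) * ((c : ℂ) • D.pinch X) * σ.rpowH (1/2) = (c : ℂ) • D.pinch A := by
    rw [← pinch_smul, ← pinch_conj D hσ, hX, Matrix.mul_smul, Matrix.smul_mul, conj_conj hσ]
    rw [show (1/2 : ℝ) + -(1/2) = 0 by ring, conj_zero hσ, pinch_smul]
  rw [h5] at h4
  have hcA : ((c : ℂ) • D.pinch A).PosSemidef := PosSemidef.smul (pinch_psd D hA) hcC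
  refine (trace_rpowH_mono (conj_psd hσ hρ q) (rpowH_psd hcA _) h4 hα.le).trans ?_
  rw [rpowH_rpowH hcA, one_div_mul_cancel hα0, rpowH_one hcA.1, Matrix.trace_smul, pinch_trace]
  simp

/-- one-shot upper bound -/
lemma upper (D : PinchData σ T) (hσ : σ.PosDef) {α : ℝ} (hα : 1 < α) {ρ : Matrix n n ℂ} (hρ : ρ.PosSemidef) :
    ∃ A : Matrix n n ℂ, A.PosSemidef ∧ (Matrix.gmean (1/α) σ A - ρ).PosSemidef ∧
    A.trace.re ≤ (Fintype.card T : ℝ) ^ α *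
      ((σ.rpowH ((1-α)/(2*α)) * ρ * σ.rpowH ((1-α)/(2*α))).rpowH α).trace.re := by
  have hα0 : α ≠ 0 := by positivity
  set c : ℝ := (Fintype.card T : ℝ) with hc
  have hc0 : 0 ≤ c := by positivity
  have hcC : (0 : ℂ) ≤ (c : ℂ) := by rwa [Complex.zero_le_real]
  set q : ℝ := (1-α)/(2*α) with hq
  set Y := σ.rpowH q * ρ * σ.rpowH q with hY
  have hYp : Y.PosSemidef := conj_psd hσ hρ _
  have hcY : ((c : ℂ) • Y).PosSemidef := PosSemidef.smul hYp hcC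
  set Z := D.pinch ((c : ℂ) • Y) with hZ
  have hZp : Z.PosSemidef := pinch_psd D hcY
  refine ⟨Z.rpowH α, rpowH_psd hZp α, ?_, ?_⟩
  · rw [Matrix.gmean, rpowH_sandwich D hσ (rpowH_psd hZp α) (fun t =>
      rpowH_intertwine hZp.1 hZp.1 (D.p t) (by rw [hZ, pinch_mul_p, p_mul_pinch]) α),
      rpowH_rpowH hZp, mul_one_div_cancel hα0, rpowH_one hZp.1, conj_conj hσ, hZ,
      ← pinch_conj D hσ, hY, Matrix.mul_smul, Matrix.smul_mul, conj_conj hσ]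
    rw [show 1/2 + -(1/2) * (1/α) + q = 0 by rw [hq]; field_simp; ring, conj_zero hσ, pinch_smul]
    exact pinch_ineq D hρ
  · have h1 : c ^ α * (Y.rpowH α).trace.re = (((c : ℂ) • Y).rpowH α).trace.re := by
      rw [rpowH_smul hYp hc0, Matrix.trace_smul]; simp
    rw [h1]
    refine trace_rpowH_le hZp hcY D.p ?_ ?_ ?_ hα.le
    · simp only [D.herm, D.idem, D.sum]
    · simp only [D.herm, D.idem, D.sum]
    · simp only [D.herm]
      rw [hZ, PinchData.pinch, sub_self]
      exact PosSemidef.zero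

lemma QSharp_bounds (D : PinchData σ T) (hσ : σ.PosDef) {α : ℝ} (hα : 1 < α) {ρ : Matrix n n ℂ} (hρ : ρ.PosSemidef)
    (hT : 0 < Fintype.card T) :
    ((σ.rpowH ((1-α)/(2*α)) * ρ * σ.rpowH ((1-α)/(2*α))).rpowH α).trace.re / (Fintype.card T : ℝ)
      ≤ QSharp α ρ σ ∧
    QSharp α ρ σ ≤ (Fintype.card T : ℝ) ^ α *
      ((σ.rpowH ((1-α)/(2*α)) * ρ * σ.rpowH ((1-α)/(2*α))).rpowH α).trace.re := by
  obtain ⟨A, hA, hA1, hA2⟩ := upper D hσ hα hρ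
  have hT' : (0 : ℝ) < Fintype.card T := by exact_mod_cast hT
  have hlow := fun B : Matrix n n ℂ => lower D hσ hα (A := B) hρ
  rw [QSharp]
  generalize ((σ.rpowH ((1-α)/(2*α)) * ρ * σ.rpowH ((1-α)/(2*α))).rpowH α).trace.re = Q at *
  have lb : ∀ t ∈ { t : ℝ | ∃ A : Matrix n n ℂ, A.PosSemidef ∧
      (Matrix.gmean (1/α) σ A - ρ).PosSemidef ∧ t = A.trace.re },
      Q / (Fintype.card T : ℝ) ≤ t := by
    rintro t ⟨B, hB, hB1, ht⟩
    rw [ht, div_le_iff₀ hT', mul_comm]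
    exact hlow B hB hB1
  constructor
  · exact le_csInf ⟨A.trace.re, A, hA, hA1, rfl⟩ lb
  · exact (csInf_le ⟨_, lb⟩ ⟨A, hA, hA1, rfl⟩).trans hA2

end oneshot

section tensor
variable {ι : Type*} [Fintype ι] [DecidableEq ι]

lemma tpow_mul (A B : Matrix ι ι ℂ) (n : ℕ) : tpow (A * B) n = tpow A n * tpow B n := by
  ext f g
  simp only [tpow, Matrix.of_apply, Matrix.mul_apply]
  rw [Finset.prod_univ_sum]
  simp only [Fintype.piFinset_univ, Finset.prod_mul_distrib]

lemma tpow_conjTranspose (A : Matrix ι ι ℂ) (n : ℕ) : tpow Aᴴ n = (tpow A n)ᴴ := by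
  ext f g
  simp [tpow, conjTranspose_apply]

lemma tpow_diagonal (d : ι → ℂ) (n : ℕ) :
    tpow (diagonal d) n = diagonal (fun f : Fin n → ι => ∏ k, d (f k)) := by
  ext f g
  simp only [tpow, Matrix.of_apply]
  by_cases h : f = g
  · subst h; simp
  · rw [diagonal_apply_ne _ h]
    obtain ⟨k, hk⟩ := Function.ne_iff.1 h
    exact Finset.prod_eq_zero (Finset.mem_univ k) (diagonal_apply_ne _ hk)

lemma tpow_one (n : ℕ) : tpow (1 : Matrix ι ι ℂ) n = 1 := by
  rw [← diagonal_one, tpow_diagonal]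
  simp

lemma tpow_trace (A : Matrix ι ι ℂ) (n : ℕ) : (tpow A n).trace = A.trace ^ n := by
  simp only [Matrix.trace, Matrix.diag, tpow, Matrix.of_apply]
  have := Finset.prod_univ_sum (fun _ : Fin n => (Finset.univ : Finset ι)) (fun _ i => A i i)
  rw [Fintype.piFinset_univ] at this
  rw [← this]
  simp

lemma tpow_spec {A : Matrix ι ι ℂ} (hA : A.IsHermitian) (n : ℕ) :
    ∃ U : Matrix (Fin n → ι) (Fin n → ι) ℂ, Uᴴ * U = 1 ∧ U * Uᴴ = 1 ∧
      tpow A n = U * diagonal (fun f => ((∏ k, hA.eigenvalues (f k) : ℝ) : ℂ)) * Uᴴ ∧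
      ∀ r : ℝ, tpow (A.rpowH r) n
        = U * diagonal (fun f => ((∏ k, hA.eigenvalues (f k) ^ r : ℝ) : ℂ)) * Uᴴ := by
  obtain ⟨U, h1, h2, h3, h4⟩ := spec hA
  refine ⟨tpow U n, ?_, ?_, ?_, ?_⟩
  · rw [← tpow_conjTranspose, ← tpow_mul, h1, tpow_one]
  · rw [← tpow_conjTranspose, ← tpow_mul, h2, tpow_one]
  · generalize hA.eigenvalues = a at *
    rw [h3, tpow_mul, tpow_mul, tpow_conjTranspose, tpow_diagonal]
    push_cast
    rfl
  · intro r
    rw [h4, tpow_mul, tpow_mul, tpow_conjTranspose, tpow_diagonal]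
    push_cast
    rfl

lemma tpow_psd {A : Matrix ι ι ℂ} (hA : A.PosSemidef) (n : ℕ) : (tpow A n).PosSemidef := by
  obtain ⟨U, h1, h2, h3, h4⟩ := tpow_spec hA.1 n
  rw [h3]
  exact (diag_psd fun f => Finset.prod_nonneg fun k _ =>
    hA.eigenvalues_nonneg (f k)).mul_mul_conjTranspose_same U

lemma tpow_pd {A : Matrix ι ι ℂ} (hA : A.PosDef) (n : ℕ) : (tpow A n).PosDef := by
  obtain ⟨U, h1, h2, h3, h4⟩ := tpow_spec hA.1 n
  rw [h3]
  have hd : (diagonal (fun f : Fin n → ι =>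
      ((∏ k, hA.1.eigenvalues (f k) : ℝ) : ℂ))).PosDef := by
    refine PosDef.diagonal fun f => ?_
    rw [Complex.zero_lt_real]
    exact Finset.prod_pos fun k _ => hA.eigenvalues_pos (f k)
  refine hd.mul_mul_conjTranspose_same ?_
  intro x y hxy
  have := congrArg (fun v => v ᵥ* Uᴴ) hxy
  simpa [Matrix.vecMul_vecMul, h2] using this

lemma tpow_rpowH {A : Matrix ι ι ℂ} (hA : A.PosSemidef) (n : ℕ) (r : ℝ) :
    (tpow A n).rpowH r = tpow (A.rpowH r) n := by
  obtain ⟨U, h1, h2, h3, h4⟩ := tpow_spec hA.1 n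
  rw [h4, h3, rpowH_of_diag U h2]
  simp only [Real.finsetProd_rpow _ _ (fun k _ => hA.eigenvalues_nonneg _)]

/-- The type (frequency count) of a string. -/
noncomputable def strType {n : ℕ} (f : Fin n → ι) : ι → Fin (n + 1) := fun i =>
  ⟨(Finset.univ.filter fun k => f k = i).card,
    Nat.lt_succ_of_le (by simpa using Finset.card_le_univ (Finset.univ.filter fun k => f k = i))⟩

lemma prod_strType {n : ℕ} (e : ι → ℝ) (f : Fin n → ι) :
    ∏ k, e (f k) = ∏ i, e i ^ (strType f i : ℕ) := by
  rw [← Finset.prod_fiberwise' Finset.univ f e]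
  simp [strType]

/-- Pinching data of a tensor power with polynomially many projections. -/
lemma exists_pinch {A : Matrix ι ι ℂ} (hA : A.PosDef) (n : ℕ) :
    Nonempty (PinchData (tpow A n) (ι → Fin (n + 1))) := by
  obtain ⟨U, h1, h2, h3, h4⟩ := tpow_spec hA.1 n
  have hpos := hA.eigenvalues_pos
  generalize hA.1.eigenvalues = e at *
  let ind : (ι → Fin (n + 1)) → (Fin n → ι) → ℂ := fun t f => if strType f = t then 1 else 0
  have hmul : ∀ a b : (Fin n → ι) → ℂ, (U * diagonal a * Uᴴ) * (U * diagonal b * Uᴴ)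
      = U * diagonal (fun f => a f * b f) * Uᴴ := by
    intro a b
    calc _ = U * diagonal a * (Uᴴ * U) * diagonal b * Uᴴ := by simp only [Matrix.mul_assoc]
      _ = _ := by rw [h1, Matrix.mul_one, Matrix.mul_assoc U, diagonal_mul_diagonal]
  refine ⟨⟨fun t => U * diagonal (ind t) * Uᴴ, fun t => ∏ i, e i ^ (t i : ℕ), ?_, ?_, ?_, ?_, ?_, ?_⟩⟩
  · intro t
    apply isHermitian_mul_mul_conjTranspose
    rw [Matrix.IsHermitian, diagonal_conjTranspose]
    congr 1; ext f
    simp only [ind, Pi.star_apply]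
    split_ifs <;> simp
  · intro t
    rw [hmul]
    congr 3; ext f
    simp only [ind]
    split_ifs <;> simp
  · intro t u htu
    rw [hmul]
    have : (fun f => ind t f * ind u f) = fun _ => 0 := by
      ext f
      simp only [ind]
      by_cases h : strType f = t
      · rw [if_neg (show strType f ≠ u by rw [h]; exact htu), mul_zero]
      · rw [if_neg h, zero_mul]
    rw [this]
    simp
  · rw [← Matrix.sum_mul, ← Matrix.mul_sum]
    have : ∑ t, diagonal (ind t) = (1 : Matrix (Fin n → ι) (Fin n → ι) ℂ) := by
      ext f g
      rw [Matrix.sum_apply]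
      by_cases h : f = g
      · subst h
        simp [ind]
      · simp [h]
    rw [this, Matrix.mul_one, h2]
  · intro t
    exact Finset.prod_pos fun i _ => pow_pos (hpos i) _
  · intro t
    rw [h3, hmul, ← Matrix.smul_mul, ← Matrix.mul_smul, ← diagonal_smul]
    congr 3; ext f
    simp only [ind, Pi.smul_apply, smul_eq_mul]
    split_ifs with h
    · rw [prod_strType, h]
    · simp

end tensor

lemma lim_aux (C : ℝ) :
    Tendsto (fun n : ℕ => C * (Real.log ((n : ℝ) + 1) / n)) atTop (nhds 0) := by
  have h := Real.tendsto_pow_log_div_mul_add_atTop 1 (-1) 1 one_ne_zero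
  have h2 : Tendsto (fun n : ℕ => (n : ℝ) + 1) atTop atTop :=
    tendsto_atTop_add_const_right _ _ tendsto_natCast_atTop_atTop
  have h3 := (h.comp h2).const_mul C
  rw [mul_zero] at h3
  refine h3.congr fun n => ?_
  simp [Function.comp]

lemma final_limit {α Q : ℝ} (hα : 1 < α) (hQ : 0 < Q) (d : ℕ) (S : ℕ → ℝ)
    (h1 : ∀ n, Q ^ n / (((n + 1) ^ d : ℕ) : ℝ) ≤ S n)
    (h2 : ∀ n, S n ≤ (((n + 1) ^ d : ℕ) : ℝ) ^ α * Q ^ n) :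
    Tendsto (fun n : ℕ => (1 / (n : ℝ)) * (1/(α-1) * Real.logb 2 (S n))) atTop
      (nhds (1/(α-1) * Real.logb 2 Q)) := by
  have ha : 0 < α - 1 := by linarith
  have hl2 : 0 < Real.log 2 := Real.log_pos (by norm_num)
  have lo := (lim_aux (-(1/(α-1) * d / Real.log 2))).const_add (1/(α-1) * Real.logb 2 Q)
  have hi := (lim_aux (1/(α-1) * (α * d) / Real.log 2)).const_add (1/(α-1) * Real.logb 2 Q)
  rw [add_zero] at lo hi
  refine tendsto_of_tendsto_of_tendsto_of_le_of_le' lo hi ?_ ?_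
  · filter_upwards [eventually_gt_atTop 0] with n hn
    have hn' : (0 : ℝ) < n := by exact_mod_cast hn
    have hc : (0 : ℝ) < (((n + 1) ^ d : ℕ) : ℝ) := by positivity
    have hlog := Real.log_le_log (by positivity) (h1 n)
    rw [Real.log_div (by positivity) hc.ne', Real.log_pow] at hlog
    push_cast at hlog
    rw [Real.log_pow] at hlog
    have e : 1/(α-1) * Real.logb 2 Q + -(1/(α-1) * d / Real.log 2) * (Real.log ((n : ℝ) + 1) / n)
        = 1 / (n : ℝ) * (1/(α-1) * ((n * Real.log Q - d * Real.log ((n : ℝ) + 1)) / Real.log 2)) := by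
      rw [Real.logb]; field_simp; ring
    rw [e, Real.logb]
    gcongr
  · filter_upwards [eventually_gt_atTop 0] with n hn
    have hn' : (0 : ℝ) < n := by exact_mod_cast hn
    have hc : (0 : ℝ) < (((n + 1) ^ d : ℕ) : ℝ) := by positivity
    have hS : 0 < S n := lt_of_lt_of_le (by positivity) (h1 n)
    have hlog := Real.log_le_log hS (h2 n)
    rw [Real.log_mul (by positivity) (by positivity), Real.log_pow, Real.log_rpow hc] at hlog
    push_cast at hlog
    rw [Real.log_pow] at hlog
    have e : 1/(α-1) * Real.logb 2 Q + (1/(α-1) * (α * d) / Real.log 2) * (Real.log ((n : ℝ) + 1) / n)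
        = 1 / (n : ℝ) * (1/(α-1) * ((α * (d * Real.log ((n : ℝ) + 1)) + n * Real.log Q) / Real.log 2)) := by
      rw [Real.logb]; field_simp; ring
    rw [e, Real.logb]
    gcongr

end RegDiv

/-- the regularization of D^#_α equals the sandwiched Rényi
divergence: (1/n)·D^#_α(ρ^{⊗n}‖σ^{⊗n}) → 𝐷̃_α(ρ‖σ). -/
theorem DSharp_regularized_eq_Dtilde
    {ι : Type*} [Fintype ι] [DecidableEq ι]
    (α : ℝ) (hα : 1 < α)
    (ρ σ : Matrix ι ι ℂ) (hρ : ρ.PosSemidef) (hρ0 : ρ ≠ 0) (hσ : σ.PosDef) :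
    Tendsto (fun n : ℕ => (1 / (n : ℝ)) * DSharp α (tpow ρ n) (tpow σ n))
      atTop (nhds (Dtilde α ρ σ)) := by
  set q : ℝ := (1-α)/(2*α) with hq
  have hY : (σ.rpowH q * ρ * σ.rpowH q).PosSemidef := RegDiv.conj_psd hσ hρ q
  have hY0 : σ.rpowH q * ρ * σ.rpowH q ≠ 0 := by
    intro h
    apply hρ0
    have := RegDiv.conj_conj hσ ρ (-q) q
    rw [h, neg_add_cancel, RegDiv.conj_zero hσ] at this
    simpa using this.symm
  have hQ := RegDiv.trace_rpowH_pos hY hY0 α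
  have hre : ((σ.rpowH q * ρ * σ.rpowH q).rpowH α).trace
      = ((((σ.rpowH q * ρ * σ.rpowH q).rpowH α).trace.re : ℝ) : ℂ) := by
    have h0 := (RegDiv.rpowH_psd hY α).trace_nonneg
    exact Complex.ext rfl (by simpa using (Complex.nonneg_iff.1 h0).2.symm)
  have hpow : ∀ n : ℕ, (((tpow σ n).rpowH q * tpow ρ n * (tpow σ n).rpowH q).rpowH α).trace.re
      = (((σ.rpowH q * ρ * σ.rpowH q).rpowH α).trace.re) ^ n := by
    intro n
    rw [RegDiv.tpow_rpowH hσ.posSemidef, ← RegDiv.tpow_mul, ← RegDiv.tpow_mul,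
      RegDiv.tpow_rpowH hY, RegDiv.tpow_trace]
    conv_lhs => rw [hre]
    rw [← Complex.ofReal_pow, Complex.ofReal_re]
  have hb := fun n : ℕ => RegDiv.QSharp_bounds (RegDiv.exists_pinch hσ n).some
    (RegDiv.tpow_pd hσ n) hα (RegDiv.tpow_psd hρ n) Fintype.card_pos
  have hcard : ∀ n : ℕ, Fintype.card (ι → Fin (n + 1)) = (n + 1) ^ Fintype.card ι := by
    intro n; simp
  have hb1 := fun n : ℕ => (hb n).1
  have hb2 := fun n : ℕ => (hb n).2
  simp only [hcard, ← hq, hpow] at hb1 hb2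
  exact RegDiv.final_limit hα hQ (Fintype.card ι) (fun n => QSharp α (tpow ρ n) (tpow σ n)) hb1 hb2
end
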